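/- There exists an absolute constant c ≥ 1 (independent of the dimension and of the bodies) such that for every dimension d ≥ 2, every pair of centrally symmetric convex bodies C, D ⊆ ℝ^d and every α > 0, one has c^{−d} · N_{C°}(D°, α) ≤ N_D(C, α) ≤ c^{d} · N_{C°}(D°, α), where N_D(U,α) is the translative covering number of U by translates of α·D. -/

import Mathlib

open Set MeasureTheory Metric
open scoped Pointwise RealInnerProductSpace ENNReal

noncomputable section

abbrev Euc (d : ℕ) := EuclideanSpace ℝ (Fin d)

/-- A convex body: a compact convex set with nonempty interior. -/
def IsConvexBody {d : ℕ} (K : Set (Euc d)) : Prop :=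
  IsCompact K ∧ Convex ℝ K ∧ (interior K).Nonempty

/-- The polar of a set. -/
def polarSet {d : ℕ} (S : Set (Euc d)) : Set (Euc d) :=
  {y | ∀ x ∈ S, ⟪x, y⟫ ≤ 1}

/-- The Hilbert distance with respect to the body `K`. -/
def hilbertDist {d : ℕ} (K : Set (Euc d)) (x y : Euc d) : ℝ :=
  -(1 / 2) * Real.log ((1 - gauge ((fun k => k - x) '' K) (y - x)) *
    (1 - gauge ((fun k => k - y) '' K) (x - y)))

/-- The Hilbert ball of radius `r` centered at `x`. -/
def hilbertBall {d : ℕ} (K : Set (Euc d)) (x : Euc d) (r : ℝ) : Set (Euc d) :=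
  {y ∈ interior K | hilbertDist K x y ≤ r}

/-- The Hilbert covering number of `U` at scale `α` in the geometry induced by `K`. -/
def hilbertCov {d : ℕ} (K U : Set (Euc d)) (α : ℝ) : ℕ :=
  sInf {m : ℕ | ∃ x : Fin m → Euc d, (∀ i, x i ∈ interior K) ∧
    U ⊆ ⋃ i, hilbertBall K (x i) α}

/-- The translative covering number of `U` by translates of `α • D`. -/
def transCov {d : ℕ} (D U : Set (Euc d)) (α : ℝ) : ℕ :=
  sInf {m : ℕ | ∃ x : Fin m → Euc d, U ⊆ ⋃ i, x i +ᵥ α • D}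

/-- The Hilbert `α`-expansion of `G` in `K`. -/
def hilbertExpand {d : ℕ} (K G : Set (Euc d)) (α : ℝ) : Set (Euc d) :=
  {x ∈ interior K | sInf (hilbertDist K x '' G) ≤ α}

/-- The Lebesgue volume of the Euclidean unit ball in `ℝ^d`. -/
def ωd (d : ℕ) : ℝ := (volume (ball (0 : Euc d) 1)).toReal

/-- The Hilbert Finsler unit ball at `y` in the geometry induced by `K`. -/
def finslerBall {d : ℕ} (K : Set (Euc d)) (y : Euc d) : Set (Euc d) :=
  {v | gauge ((fun k => k - y) '' K) v + gauge ((fun k => k - y) '' K) (-v) ≤ 2}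

/-- The Hilbert Holmes–Thompson volume of `U` in the geometry induced by `K`. -/
def volH {d : ℕ} (K U : Set (Euc d)) : ℝ :=
  (1 / ωd d) * ∫ y in U, (volume (polarSet (finslerBall K y))).toReal

/-- The recentered Macbeath region `A(x) := (K ∩ (2x − K)) − x`. -/
def macbeathA {d : ℕ} (K : Set (Euc d)) (x : Euc d) : Set (Euc d) :=
  (fun k => k - x) '' (K ∩ ((fun k => (2 : ℝ) • x - k) '' K))

/-!
Write `|K|` for volume and put `B = α D`. A maximal packing of `C` by translates of `B / 2` gives
`N_D(C, α) ≤ 2ⁿ |C + B| / |B|`. Since `x + C°` meets `B°` in a set contained in a translate of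
`2 (C° ∩ B°)`, while `C° ∩ B° ⊆ 2 (C + B)°`, one has `|B°| ≤ 4ⁿ N_{C°}(D°, α) |(C + B)°|`.
Together these bounds reduce the duality to a comparison of the volume products `|K| |K°|` for
`K = C + B` and `K = B`, up to a factor exponential in the dimension; bipolarity then gives the
reverse inequality.

The volume of `K` is proportional to `∫ e^{-g²}`, where `g` is the gauge of `K`; let `h` be the
gauge of `K°`. The upper bound on the volume product is the functional Blaschke–Santaló inequality,
proved in dimension one by Prékopa–Leindler in multiplicative form and carried to products by
integrating out one factor at a time.

For the lower bound (Bourgain–Milman), the proximal map of `g² / 2` yields a contraction `c` with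
`g(u + c u)² + h(u - c u)² ≤ 4 (|u|² - |c u|²)`. Shifting the contour of a Gaussian integral from
`z` to `z + i F(z)`, for a contraction `F`, bounds `∫ e^{-b (|z|² - |F z|²)} |det (1 + i F')|` from
below by the Gaussian integral. For `F (u, v) = (c v, -c u)` this determinant is the Jacobian of
the real map `(u, v) ↦ (u + c v, v + c u)`, and changing variables bounds
`∫∫ e^{-g(p + q)² - h(p - q)²}`, hence `(∫ e^{-g²}) (∫ e^{-h²})`, from below.
-/

section BrunnMinkowski

/-- Translating `K` by `min L` and `L` by `max K` makes the two sets overlap in one point only, and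
both translates lie in `K + L ⊆ 2H`. -/
lemma volume_add_volume_le_of_isCompact {K L H : Set ℝ} (hK : IsCompact K) (hL : IsCompact L)
    (hK₀ : K.Nonempty) (hL₀ : L.Nonempty) (h : ∀ x ∈ K, ∀ y ∈ L, midpoint ℝ x y ∈ H) :
    volume K + volume L ≤ 2 * volume H := by
  obtain ⟨k, hk, hk_max⟩ := hK.exists_isGreatest hK₀
  obtain ⟨l, hl, hl_min⟩ := hL.exists_isLeast hL₀
  have sum_mem : ∀ x ∈ K, ∀ y ∈ L, x + y ∈ (2 : ℝ) • H := fun x hx y hy =>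
    ⟨midpoint ℝ x y, h x hx y hy, by simp [midpoint_eq_smul_add]⟩
  have inter_subset : (l +ᵥ K) ∩ (k +ᵥ L) ⊆ {l + k} := by
    rintro _ ⟨⟨x, hx, rfl⟩, y, hy, hxy⟩
    simp only [vadd_eq_add] at hxy
    have := hk_max hx
    have := hl_min hy
    simp only [vadd_eq_add, mem_singleton_iff]
    linarith
  calc volume K + volume L = volume (l +ᵥ K) + volume (k +ᵥ L) := by
        rw [measure_vadd, measure_vadd]
    _ = volume ((l +ᵥ K) ∪ (k +ᵥ L)) := by
        refine (measure_union₀ ?_ ?_).symm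
        · exact (hL.vadd k).measurableSet.nullMeasurableSet
        · exact measure_mono_null inter_subset (by simp)
    _ ≤ volume ((2 : ℝ) • H) := by
        refine measure_mono (union_subset ?_ ?_)
        · rintro _ ⟨x, hx, rfl⟩
          simpa [add_comm] using sum_mem x hx l hl
        · rintro _ ⟨y, hy, rfl⟩
          exact sum_mem k hk y hy
    _ = 2 * volume H := by simp [Measure.addHaar_smul]

lemma measure_eq_biSup_isCompact_nonempty {X : Type*} [TopologicalSpace X] [MeasurableSpace X]
    {μ : Measure X} [μ.InnerRegular] {s : Set X} (hs : MeasurableSet s) :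
    μ s = ⨆ K ∈ {K | K ⊆ s ∧ IsCompact K ∧ K.Nonempty}, μ K := by
  refine le_antisymm ?_ (iSup₂_le fun K hK => measure_mono hK.1)
  rw [hs.measure_eq_iSup_isCompact]
  refine iSup₂_le fun K hKs => iSup_le fun hK => ?_
  rcases K.eq_empty_or_nonempty with rfl | hK₀
  · simp
  · exact le_iSup₂_of_le K ⟨hKs, hK, hK₀⟩ le_rfl

theorem volume_add_volume_le {A B H : Set ℝ} (hA : MeasurableSet A) (hB : MeasurableSet B)
    (hA₀ : A.Nonempty) (hB₀ : B.Nonempty) (h : ∀ x ∈ A, ∀ y ∈ B, midpoint ℝ x y ∈ H) :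
    volume A + volume B ≤ 2 * volume H := by
  rw [measure_eq_biSup_isCompact_nonempty hA, measure_eq_biSup_isCompact_nonempty hB]
  refine ENNReal.biSup_add_biSup_le ?_ ?_ fun K ⟨hKA, hK, hK₀⟩ L ⟨hLB, hL, hL₀⟩ =>
    volume_add_volume_le_of_isCompact hK hL hK₀ hL₀ fun x hx y hy => h x (hKA hx) y (hLB hy)
  · exact ⟨{hA₀.some}, by simpa using hA₀.some_mem, isCompact_singleton, by simp⟩
  · exact ⟨{hB₀.some}, by simpa using hB₀.some_mem, isCompact_singleton, by simp⟩

end BrunnMinkowski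

section PrekopaLeindler

lemma lintegral_eq_lintegral_measure_ofReal_lt {X : Type*} [MeasurableSpace X] {μ : Measure X}
    {f : X → ℝ≥0∞} (hf : Measurable f) (hf_top : ∀ x, f x ≠ ⊤) :
    ∫⁻ x, f x ∂μ = ∫⁻ t in Ioi (0 : ℝ), μ {x | ENNReal.ofReal t < f x} := by
  calc ∫⁻ x, f x ∂μ = ∫⁻ x, ENNReal.ofReal (f x).toReal ∂μ := by
        simp only [ENNReal.ofReal_toReal (hf_top _)]
    _ = ∫⁻ t in Ioi (0 : ℝ), μ {x | t < (f x).toReal} :=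
        lintegral_eq_lintegral_meas_lt _ (.of_forall fun _ => ENNReal.toReal_nonneg)
          hf.ennreal_toReal.aemeasurable
    _ = _ := setLIntegral_congr_fun measurableSet_Ioi fun t ht => by
        simp only [ENNReal.ofReal_lt_iff_lt_toReal (mem_Ioi.1 ht).le (hf_top _)]

/-- The superlevel sets of `f` and `g` at each level below the common supremum `1` are nonempty, so
the one-dimensional Brunn–Minkowski inequality applies to them. -/
lemma lintegral_add_lintegral_le_of_iSup_eq_one {f g h : ℝ → ℝ≥0∞} (hf : Measurable f)
    (hg : Measurable g) (hh : Measurable h) (hf_sup : ⨆ x, f x = 1) (hg_sup : ⨆ x, g x = 1)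
    (H : ∀ x y, min (f x) (g y) ≤ h (midpoint ℝ x y)) :
    (∫⁻ x, f x) + ∫⁻ x, g x ≤ 2 * ∫⁻ x, h x := by
  have hf_le : ∀ x, f x ≤ 1 := fun x => hf_sup ▸ le_iSup f x
  have hg_le : ∀ x, g x ≤ 1 := fun x => hg_sup ▸ le_iSup g x
  have level : ∀ t : ℝ, volume {x | ENNReal.ofReal t < f x} + volume {x | ENNReal.ofReal t < g x}
      ≤ 2 * volume {x | ENNReal.ofReal t < min (h x) 1} := by
    intro t
    rcases lt_or_ge (ENNReal.ofReal t) 1 with ht | ht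
    · refine volume_add_volume_le (measurableSet_lt measurable_const hf)
        (measurableSet_lt measurable_const hg) (lt_iSup_iff.1 (ht.trans_eq hf_sup.symm))
        (lt_iSup_iff.1 (ht.trans_eq hg_sup.symm)) fun x hx y hy => ?_
      exact lt_min ((lt_min hx hy).trans_le (H x y)) ht
    · simp [((hf_le _).trans ht).not_gt, ((hg_le _).trans ht).not_gt]
  calc (∫⁻ x, f x) + ∫⁻ x, g x
      = (∫⁻ t in Ioi (0 : ℝ), volume {x | ENNReal.ofReal t < f x}) +
          ∫⁻ t in Ioi (0 : ℝ), volume {x | ENNReal.ofReal t < g x} := by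
        rw [lintegral_eq_lintegral_measure_ofReal_lt hf fun x =>
            ne_top_of_le_ne_top (by simp) (hf_le x),
          lintegral_eq_lintegral_measure_ofReal_lt hg fun x =>
            ne_top_of_le_ne_top (by simp) (hg_le x)]
    _ ≤ ∫⁻ t in Ioi (0 : ℝ), 2 * volume {x | ENNReal.ofReal t < min (h x) 1} :=
        (le_lintegral_add _ _).trans (lintegral_mono level)
    _ = 2 * ∫⁻ x, min (h x) 1 := by
        rw [lintegral_const_mul' _ _ (by simp),
          lintegral_eq_lintegral_measure_ofReal_lt (hh.min measurable_const) (by simp)]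
    _ ≤ 2 * ∫⁻ x, h x := by gcongr; exact min_le_left _ _

lemma mul_le_sq_of_add_le_two_mul {a b c : ℝ≥0∞} (h : a + b ≤ 2 * c) : a * b ≤ c ^ 2 := by
  rcases eq_or_ne c ⊤ with rfl | hc
  · simp
  have hab : a + b ≠ ⊤ := ne_top_of_le_ne_top (by finiteness) h
  lift a to NNReal using ne_top_of_le_ne_top hab le_self_add
  lift b to NNReal using ne_top_of_le_ne_top hab le_add_self
  lift c to NNReal using hc
  norm_cast at h ⊢
  have : 4 * (a * b) ≤ 4 * c ^ 2 :=
    calc 4 * (a * b) = 4 * a * b := by ring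
      _ ≤ (a + b) ^ 2 := four_mul_le_sq_add a b
      _ ≤ (2 * c) ^ 2 := by gcongr
      _ = 4 * c ^ 2 := by ring
  exact le_of_mul_le_mul_left this (by simp)

lemma rpow_half_sq (a : ℝ≥0∞) : (a ^ (1 / 2 : ℝ)) ^ 2 = a := by
  rw [← ENNReal.rpow_natCast, ← ENNReal.rpow_mul]; norm_num

lemma lintegral_mul_lintegral_le_of_iSup_ne_top {f g h : ℝ → ℝ≥0∞} (hf : Measurable f)
    (hg : Measurable g) (hh : Measurable h) (hf_sup : ⨆ x, f x ≠ ⊤) (hg_sup : ⨆ x, g x ≠ ⊤)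
    (H : ∀ x y, f x * g y ≤ h (midpoint ℝ x y) ^ 2) :
    (∫⁻ x, f x) * ∫⁻ x, g x ≤ (∫⁻ x, h x) ^ 2 := by
  set a := ⨆ x, f x with ha
  set b := ⨆ x, g x with hb
  rcases eq_or_ne a 0 with ha₀ | ha₀
  · simp [ENNReal.iSup_eq_zero.1 (ha ▸ ha₀)]
  rcases eq_or_ne b 0 with hb₀ | hb₀
  · simp [ENNReal.iSup_eq_zero.1 (hb ▸ hb₀)]
  set c := (a⁻¹ * b⁻¹) ^ (1 / 2 : ℝ)
  have hc_sq : c ^ 2 = a⁻¹ * b⁻¹ := rpow_half_sq _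
  have hc₀ : c ^ 2 ≠ 0 := by simp [hc_sq, hf_sup, hg_sup]
  have hc_top : c ^ 2 ≠ ⊤ := by rw [hc_sq]; finiteness
  have min_le : ∀ x y, min (a⁻¹ * f x) (b⁻¹ * g y) ≤ c * h (midpoint ℝ x y) := fun x y => by
    refine (ENNReal.pow_le_pow_left_iff two_ne_zero).1 ?_
    calc min (a⁻¹ * f x) (b⁻¹ * g y) ^ 2 ≤ (a⁻¹ * f x) * (b⁻¹ * g y) := by
          rw [sq]; exact mul_le_mul' (min_le_left _ _) (min_le_right _ _)
      _ = c ^ 2 * (f x * g y) := by rw [hc_sq, mul_mul_mul_comm]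
      _ ≤ c ^ 2 * h (midpoint ℝ x y) ^ 2 := by gcongr; exact H x y
      _ = (c * h (midpoint ℝ x y)) ^ 2 := by rw [mul_pow]
  have normalized := mul_le_sq_of_add_le_two_mul <| lintegral_add_lintegral_le_of_iSup_eq_one
    (hf.const_mul a⁻¹) (hg.const_mul b⁻¹) (hh.const_mul c)
    (by rw [← ENNReal.mul_iSup, ENNReal.inv_mul_cancel ha₀ hf_sup])
    (by rw [← ENNReal.mul_iSup, ENNReal.inv_mul_cancel hb₀ hg_sup]) min_le
  rw [lintegral_const_mul _ hf, lintegral_const_mul _ hg, lintegral_const_mul _ hh, mul_pow,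
    mul_mul_mul_comm, ← hc_sq] at normalized
  exact (ENNReal.mul_le_mul_iff_right hc₀ hc_top).1 normalized

lemma lintegral_eq_iSup_lintegral_min_natCast {X : Type*} [MeasurableSpace X] {μ : Measure X}
    {f : X → ℝ≥0∞} (hf : Measurable f) : ∫⁻ x, f x ∂μ = ⨆ n : ℕ, ∫⁻ x, min (f x) n ∂μ := by
  rw [← lintegral_iSup (fun n => hf.min measurable_const)
    fun m n hmn x => min_le_min_left _ (by exact_mod_cast hmn)]
  refine lintegral_congr fun x => ?_
  rw [← inf_iSup_eq, ENNReal.iSup_natCast, inf_top_eq]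

/-- The Prékopa–Leindler inequality for midpoints, as a property of the space, so that it can be
carried to products. -/
def PrekopaLeindler (E : Type*) [AddCommGroup E] [Module ℝ E] [MeasureSpace E] : Prop :=
  ∀ ⦃f g h : E → ℝ≥0∞⦄, Measurable f → Measurable g → Measurable h →
    (∀ x y, f x * g y ≤ h (midpoint ℝ x y) ^ 2) →
    (∫⁻ x, f x) * ∫⁻ x, g x ≤ (∫⁻ x, h x) ^ 2

theorem prekopaLeindler_real : PrekopaLeindler ℝ := by
  intro f g h hf hg hh H
  have trunc : ∀ n : ℕ, (∫⁻ x, min (f x) n) * ∫⁻ x, min (g x) n ≤ (∫⁻ x, h x) ^ 2 := by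
    intro n
    have iSup_ne_top (u : ℝ → ℝ≥0∞) : ⨆ x, min (u x) n ≠ ⊤ :=
      ne_top_of_le_ne_top (by simp) (iSup_le fun x => min_le_right (u x) n)
    have min_le : ∀ x y, min (f x) n * min (g y) n ≤ h (midpoint ℝ x y) ^ 2 := fun x y =>
      (mul_le_mul' (min_le_left _ _) (min_le_left _ _)).trans (H x y)
    exact lintegral_mul_lintegral_le_of_iSup_ne_top (hf.min measurable_const)
      (hg.min measurable_const) hh (iSup_ne_top f) (iSup_ne_top g) min_le
  rw [lintegral_eq_iSup_lintegral_min_natCast hf, lintegral_eq_iSup_lintegral_min_natCast hg]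
  simp_rw [ENNReal.iSup_mul, ENNReal.mul_iSup]
  refine iSup₂_le fun m n => (trunc (max m n)).trans' ?_
  gcongr
  · exact le_max_left _ _
  · exact le_max_right _ _

theorem PrekopaLeindler.prod {E F : Type*} [AddCommGroup E] [Module ℝ E] [MeasureSpace E]
    [AddCommGroup F] [Module ℝ F] [MeasureSpace F] [SFinite (volume : Measure F)]
    (hE : PrekopaLeindler E) (hF : PrekopaLeindler F) : PrekopaLeindler (E × F) := by
  intro f g h hf hg hh H
  rw [Measure.volume_eq_prod, lintegral_prod _ hf.aemeasurable, lintegral_prod _ hg.aemeasurable,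
    lintegral_prod _ hh.aemeasurable]
  exact hE hf.lintegral_prod_right' hg.lintegral_prod_right' hh.lintegral_prod_right' fun x₁ x₂ =>
    hF (hf.comp measurable_prodMk_left) (hg.comp measurable_prodMk_left)
      (hh.comp measurable_prodMk_left) fun y₁ y₂ => H (x₁, y₁) (x₂, y₂)

theorem PrekopaLeindler.of_linearEquiv {E F : Type*} [AddCommGroup E] [Module ℝ E] [MeasureSpace E]
    [AddCommGroup F] [Module ℝ F] [MeasureSpace F] (hE : PrekopaLeindler E) (e : E ≃ₗ[ℝ] F)
    (he : MeasurePreserving e) : PrekopaLeindler F := by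
  intro f g h hf hg hh H
  rw [← he.lintegral_comp hf, ← he.lintegral_comp hg, ← he.lintegral_comp hh]
  refine hE (hf.comp he.measurable) (hg.comp he.measurable) (hh.comp he.measurable) fun x y => ?_
  have := H (e x) (e y)
  simpa [midpoint_eq_smul_add] using this

lemma prekopaLeindler_of_unique (E : Type*) [AddCommGroup E] [Module ℝ E] [MeasureSpace E]
    [Unique E] : PrekopaLeindler E := by
  intro f g h _ _ _ H
  simp only [lintegral_unique, mul_pow]
  calc f default * volume univ * (g default * volume univ)
      = f default * g default * volume univ ^ 2 := by ring
    _ ≤ h default ^ 2 * volume univ ^ 2 := by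
        gcongr
        exact (H default default).trans_eq (by rw [Unique.eq_default (midpoint ℝ _ _)])

section InnerProductSpace

variable {E F : Type*} [NormedAddCommGroup E] [InnerProductSpace ℝ E] [FiniteDimensional ℝ E]
  [MeasurableSpace E] [BorelSpace E] [NormedAddCommGroup F] [InnerProductSpace ℝ F]
  [FiniteDimensional ℝ F] [MeasurableSpace F] [BorelSpace F]

/-- Two Euclidean spaces of equal dimension are isometric. -/
def isometryOfFinrankEq (h : Module.finrank ℝ E = Module.finrank ℝ F) : E ≃ₗᵢ[ℝ] F :=
  (stdOrthonormalBasis ℝ E).equiv (stdOrthonormalBasis ℝ F) (finCongr h)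

lemma finrank_withLp_real_prod_euclideanSpace (n : ℕ) :
    Module.finrank ℝ (WithLp 2 (ℝ × EuclideanSpace ℝ (Fin n))) =
      Module.finrank ℝ (EuclideanSpace ℝ (Fin (n + 1))) := by
  rw [(WithLp.linearEquiv 2 ℝ _).finrank_eq, Module.finrank_prod]
  simp [add_comm]

theorem prekopaLeindler_euclideanSpace (n : ℕ) : PrekopaLeindler (EuclideanSpace ℝ (Fin n)) := by
  induction n with
  | zero => exact prekopaLeindler_of_unique _
  | succ n ih =>
    have : PrekopaLeindler (WithLp 2 (ℝ × EuclideanSpace ℝ (Fin n))) :=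
      (prekopaLeindler_real.prod ih).of_linearEquiv (WithLp.linearEquiv 2 ℝ _).symm
        (WithLp.volume_preserving_toLp ..)
    let e := isometryOfFinrankEq (finrank_withLp_real_prod_euclideanSpace n)
    exact this.of_linearEquiv e.toLinearEquiv e.measurePreserving

end InnerProductSpace

end PrekopaLeindler

section LowerSemicontinuous

variable {X : Type*} [TopologicalSpace X]

lemma lowerSemicontinuous_mul {f g : X → ℝ≥0∞} (hf : LowerSemicontinuous f)
    (hg : LowerSemicontinuous g) : LowerSemicontinuous fun x => f x * g x := by
  intro x c hc
  obtain ⟨a, ha, b, hb, hab⟩ : ∃ a < f x, ∃ b < g x, c < a * b := by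
    by_contra! hcon
    exact (ENNReal.mul_le_of_forall_lt hcon).not_gt hc
  filter_upwards [hf x a ha, hg x b hb] with y hy₁ hy₂
  exact hab.trans_le (mul_le_mul' hy₁.le hy₂.le)

lemma lowerSemicontinuous_lintegral [FirstCountableTopology X] {Y : Type*} [TopologicalSpace Y]
    [MeasurableSpace Y] [OpensMeasurableSpace Y] {μ : Measure Y} {f : X × Y → ℝ≥0∞}
    (hf : LowerSemicontinuous f) : LowerSemicontinuous fun x => ∫⁻ y, f (x, y) ∂μ := by
  intro x
  refine lowerSemicontinuousAt_iff_le_liminf.2 ?_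
  calc ∫⁻ y, f (x, y) ∂μ ≤ ∫⁻ y, Filter.liminf (fun x => f (x, y)) (nhds x) ∂μ :=
        lintegral_mono fun y => lowerSemicontinuousAt_iff_le_liminf.1
          (hf.comp (by fun_prop : Continuous fun x => (x, y)) x)
    _ ≤ Filter.liminf (fun x => ∫⁻ y, f (x, y) ∂μ) (nhds x) :=
        lintegral_liminf_le fun x =>
          (hf.comp (by fun_prop : Continuous fun y => (x, y))).measurable

end LowerSemicontinuous

section Symmetrize

variable {E F : Type*} [AddCommGroup E] [AddCommGroup F]

/-- A functional analogue of Steiner symmetrization: an even function whose integral is at least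
that of `p`, by the Prékopa–Leindler inequality. -/
def symmetrize (p : E → ℝ≥0∞) (t : E) : ℝ≥0∞ := ⨆ v, (p (v + t) * p (v - t)) ^ (1 / 2 : ℝ)

lemma symmetrize_even (p : E → ℝ≥0∞) : (symmetrize p).Even := fun t => by
  simp only [symmetrize, ← sub_eq_add_neg, sub_neg_eq_add, mul_comm]

lemma symmetrize_comp_neg (p : E → ℝ≥0∞) : symmetrize (fun t => p (-t)) = symmetrize p := by
  ext t
  refine (Equiv.neg E).surjective.iSup_congr _ fun v => ?_
  simp only [Equiv.neg_apply, neg_add', neg_sub', sub_neg_eq_add, mul_comm]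

lemma lowerSemicontinuous_symmetrize {X : Type*} [TopologicalSpace X] [TopologicalSpace E]
    [IsTopologicalAddGroup E] {f : X → E → ℝ≥0∞}
    (hf : LowerSemicontinuous fun q : X × E => f q.1 q.2) :
    LowerSemicontinuous fun q : X × E => symmetrize (f q.1) q.2 := by
  refine lowerSemicontinuous_iSup fun v => ?_
  refine (ENNReal.continuous_rpow_const (y := (1 / 2 : ℝ))).comp_lowerSemicontinuous ?_
    (ENNReal.monotone_rpow_of_nonneg (by norm_num))
  exact lowerSemicontinuous_mul
    (hf.comp (by fun_prop : Continuous fun q : X × E => (q.1, v + q.2)))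
    (hf.comp (by fun_prop : Continuous fun q : X × E => (q.1, v - q.2)))

lemma lintegral_le_lintegral_symmetrize [Module ℝ E] [MeasureSpace E] [MeasurableNeg E]
    [(volume : Measure E).IsNegInvariant] (hE : PrekopaLeindler E) {p : E → ℝ≥0∞}
    (hp : Measurable p) (hp_symm : Measurable (symmetrize p)) :
    ∫⁻ x, p x ≤ ∫⁻ x, symmetrize p x := by
  have mul_le : ∀ x y, p x * p (-y) ≤ symmetrize p (midpoint ℝ x y) ^ 2 := fun x y => by
    calc p x * p (-y) = ((p x * p (-y)) ^ (1 / 2 : ℝ)) ^ 2 := (rpow_half_sq _).symm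
      _ ≤ symmetrize p (midpoint ℝ x y) ^ 2 := by
        gcongr
        refine le_iSup_of_le (midpoint ℝ x (-y)) (le_of_eq ?_)
        congr 3 <;> simp only [midpoint_eq_smul_add, invOf_eq_inv] <;> module
  have := hE hp (hp.comp measurable_neg) hp_symm mul_le
  simp only [Function.comp_def, lintegral_neg_eq_self] at this
  rw [← sq] at this
  exact (ENNReal.pow_le_pow_left_iff two_ne_zero).1 this

lemma symmetrize_neg_left {f : E × F → ℝ≥0∞} (hf : f.Even) (x : E) :
    (symmetrize fun y => f (-x, y)) = symmetrize fun y => f (x, y) := by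
  refine Eq.trans ?_ (symmetrize_comp_neg _)
  exact congrArg symmetrize (funext fun y => by simpa using hf (x, -y))

lemma lintegral_prod_le_lintegral_symmetrize {X : Type*} [TopologicalSpace X]
    [MeasureSpace X] [OpensMeasurableSpace X] [TopologicalSpace F] [SecondCountableTopology F]
    [IsTopologicalAddGroup F] [Module ℝ F] [MeasureSpace F] [BorelSpace F]
    [(volume : Measure F).IsNegInvariant] [SFinite (volume : Measure F)]
    (hF : PrekopaLeindler F) {f : X × F → ℝ≥0∞} (hf : LowerSemicontinuous f) :
    ∫⁻ z, f z ≤ ∫⁻ x, ∫⁻ y, symmetrize (fun y => f (x, y)) y := by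
  have hsymm : LowerSemicontinuous fun q : X × F => symmetrize (fun y => f (q.1, y)) q.2 :=
    lowerSemicontinuous_symmetrize (f := fun x y => f (x, y)) hf
  rw [Measure.volume_eq_prod, lintegral_prod _ hf.measurable.aemeasurable]
  exact lintegral_mono fun x => lintegral_le_lintegral_symmetrize hF
    (hf.comp (Continuous.prodMk_right x)).measurable
    (hsymm.comp (Continuous.prodMk_right x)).measurable

end Symmetrize

section BlaschkeSantalo

/-- The kernel `e^{-2s}`, for which the Gaussian `e^{-|x|²}` is extremal in `BlaschkeSantalo`. -/
def expKernel (s : ℝ) : ℝ≥0∞ := ENNReal.ofReal (Real.exp (-2 * s))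

lemma expKernel_zero : expKernel 0 = 1 := by simp [expKernel]

lemma expKernel_add (s t : ℝ) : expKernel (s + t) = expKernel s * expKernel t := by
  rw [expKernel, mul_add, Real.exp_add, ENNReal.ofReal_mul (Real.exp_pos _).le]
  rfl

/-- The functional Blaschke–Santaló inequality for even functions, as a property of the space, so
that it can be carried to products; the slack `c` absorbs the factors already integrated out. -/
def BlaschkeSantalo (E : Type*) [NormedAddCommGroup E] [InnerProductSpace ℝ E] [MeasureSpace E] :
    Prop :=
  ∀ ⦃f g : E → ℝ≥0∞⦄ ⦃c : ℝ≥0∞⦄, LowerSemicontinuous f → LowerSemicontinuous g → f.Even → g.Even →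
    (∀ x y, f x * g y ≤ c * expKernel ⟪x, y⟫) →
    (∫⁻ x, f x) * ∫⁻ y, g y ≤ c * ENNReal.ofReal Real.pi ^ Module.finrank ℝ E

lemma lintegral_even {p : ℝ → ℝ≥0∞} (hp : p.Even) : ∫⁻ t, p t = 2 * ∫⁻ t in Ioi 0, p t := by
  have neg_half : ∫⁻ t in Iio 0, p t = ∫⁻ t in Ioi 0, p t := by
    have := (Measure.measurePreserving_neg (volume : Measure ℝ)).setLIntegral_comp_preimage_emb
      (Homeomorph.neg ℝ).measurableEmbedding p (Iio 0)
    simpa [hp _] using this.symm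
  rw [← lintegral_add_compl p (measurableSet_Ioi (a := (0 : ℝ))), compl_Ioi,
    setLIntegral_congr Iio_ae_eq_Iic.symm, neg_half, two_mul]

lemma lintegral_Ioi_eq_lintegral_exp (p : ℝ → ℝ≥0∞) :
    ∫⁻ t in Ioi 0, p t = ∫⁻ s, ENNReal.ofReal (Real.exp s) * p (Real.exp s) := by
  have := lintegral_image_eq_lintegral_abs_deriv_mul (s := univ) (f := Real.exp) (f' := Real.exp)
    MeasurableSet.univ (fun x _ => (Real.hasDerivAt_exp x).hasDerivWithinAt)
    Real.exp_injective.injOn p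
  simpa [Real.range_exp] using this

lemma lintegral_gaussian :
    ∫⁻ t : ℝ, ENNReal.ofReal (Real.exp (-t ^ 2)) = ENNReal.ofReal (√Real.pi) := by
  rw [← ofReal_integral_eq_lintegral_ofReal
    (by simpa using integrable_exp_neg_mul_sq (b := 1) one_pos) (.of_forall fun x => by positivity)]
  simpa using congrArg ENNReal.ofReal (integral_gaussian 1)

lemma exp_mul_exp_mul_expKernel (x y : ℝ) :
    ENNReal.ofReal (Real.exp x) * ENNReal.ofReal (Real.exp y) *
      expKernel ⟪Real.exp x, Real.exp y⟫ =
    (ENNReal.ofReal (Real.exp (midpoint ℝ x y)) *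
      ENNReal.ofReal (Real.exp (-Real.exp (midpoint ℝ x y) ^ 2))) ^ 2 := by
  have exp_mid : Real.exp (midpoint ℝ x y) ^ 2 = Real.exp x * Real.exp y := by
    rw [← Real.exp_nat_mul, ← Real.exp_add]
    congr 1
    simp [midpoint_eq_smul_add]
  rw [expKernel, Real.inner_apply, mul_pow, ← ENNReal.ofReal_pow (Real.exp_pos _).le,
    ← ENNReal.ofReal_pow (Real.exp_pos _).le, ← Real.exp_nat_mul (-_), exp_mid,
    ENNReal.ofReal_mul (Real.exp_pos _).le]
  simp

/-- In the coordinates `t = eˣ`, `s = eʸ` the bound is the Prékopa–Leindler condition with the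
Gaussian on the right. -/
theorem blaschkeSantalo_real : BlaschkeSantalo ℝ := by
  intro f g c hf hg hf_even hg_even H
  have hf_meas := hf.measurable
  have hg_meas := hg.measurable
  set d : ℝ≥0∞ := c ^ (1 / 2 : ℝ) with hd
  set γ : ℝ → ℝ≥0∞ := fun t => ENNReal.ofReal (Real.exp (-t ^ 2)) with hγ
  have hγ_meas : Measurable γ := by fun_prop
  have hγ_even : γ.Even := fun t => by simp [hγ]
  have half_line : (∫⁻ x in Ioi 0, f x) * ∫⁻ y in Ioi 0, g y ≤ (d * ∫⁻ t in Ioi 0, γ t) ^ 2 := by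
    simp only [lintegral_Ioi_eq_lintegral_exp]
    rw [← lintegral_const_mul d (by fun_prop)]
    refine prekopaLeindler_real ?_ ?_ ?_ fun x y => ?_
    iterate 3 fun_prop
    calc _ = ENNReal.ofReal (Real.exp x) * ENNReal.ofReal (Real.exp y) *
          (f (Real.exp x) * g (Real.exp y)) := mul_mul_mul_comm ..
      _ ≤ ENNReal.ofReal (Real.exp x) * ENNReal.ofReal (Real.exp y) *
          (c * expKernel ⟪Real.exp x, Real.exp y⟫) := mul_le_mul' le_rfl (H _ _)
      _ = _ := by
        rw [mul_left_comm, exp_mul_exp_mul_expKernel, mul_pow d, hd, rpow_half_sq]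
  calc (∫⁻ x, f x) * ∫⁻ y, g y = 4 * ((∫⁻ x in Ioi 0, f x) * ∫⁻ y in Ioi 0, g y) := by
        rw [lintegral_even hf_even, lintegral_even hg_even]; ring
    _ ≤ 4 * (d * ∫⁻ t in Ioi 0, γ t) ^ 2 := by gcongr
    _ = c * (∫⁻ t, γ t) ^ 2 := by
        rw [lintegral_even hγ_even, mul_pow, hd, rpow_half_sq]; ring
    _ = c * ENNReal.ofReal Real.pi ^ Module.finrank ℝ ℝ := by
        rw [lintegral_gaussian, ← ENNReal.ofReal_pow (by positivity),
          Real.sq_sqrt Real.pi_pos.le, Module.finrank_self, pow_one]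

variable {E F : Type*} [NormedAddCommGroup E] [InnerProductSpace ℝ E]
  [NormedAddCommGroup F] [InnerProductSpace ℝ F]

/-- Multiply the bound at `(v + x, y)`, `(ξ, w + η)` by the bound at `(v - x, y)`, `(-ξ, η - w)`:
the centres `v`, `w` cancel in the inner products. -/
lemma symmetrize_mul_symmetrize_le {f g : E → F → ℝ≥0∞} {c : ℝ≥0∞}
    (hg_even : ∀ ξ η, g (-ξ) (-η) = g ξ η)
    (H : ∀ x y ξ η, f x y * g ξ η ≤ c * expKernel (⟪x, ξ⟫ + ⟪y, η⟫)) (x ξ : E) (y η : F) :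
    symmetrize (fun x => f x y) x * symmetrize (g ξ) η ≤
      c * expKernel ⟪y, η⟫ * expKernel ⟪x, ξ⟫ := by
  simp only [symmetrize, ENNReal.iSup_mul, ENNReal.mul_iSup]
  refine iSup₂_le fun w v => (ENNReal.pow_le_pow_left_iff two_ne_zero).1 ?_
  have g_reflect : g ξ (w - η) = g (-ξ) (η - w) := by rw [← hg_even, neg_sub]
  calc _ = (f (v + x) y * f (v - x) y) * (g ξ (w + η) * g ξ (w - η)) := by
        rw [mul_pow, rpow_half_sq, rpow_half_sq]
    _ = (f (v + x) y * g ξ (w + η)) * (f (v - x) y * g (-ξ) (η - w)) := by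
        rw [g_reflect, mul_mul_mul_comm]
    _ ≤ (c * expKernel (⟪v + x, ξ⟫ + ⟪y, w + η⟫)) *
          (c * expKernel (⟪v - x, -ξ⟫ + ⟪y, η - w⟫)) := mul_le_mul' (H ..) (H ..)
    _ = c ^ 2 * expKernel ((⟪y, η⟫ + ⟪x, ξ⟫) + (⟪y, η⟫ + ⟪x, ξ⟫)) := by
        rw [mul_mul_mul_comm, ← sq, ← expKernel_add]
        congr 2
        simp only [inner_add_left, inner_add_right, inner_sub_left, inner_sub_right,
          inner_neg_right]
        ring
    _ = _ := by simp only [expKernel_add]; ring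

variable [FiniteDimensional ℝ E] [MeasurableSpace E] [BorelSpace E]
  [FiniteDimensional ℝ F] [MeasurableSpace F] [BorelSpace F]

theorem BlaschkeSantalo.of_linearIsometryEquiv (hE : BlaschkeSantalo E) (e : E ≃ₗᵢ[ℝ] F) :
    BlaschkeSantalo F := by
  intro f g c hf hg hf_even hg_even H
  rw [← e.measurePreserving.lintegral_comp hf.measurable,
    ← e.measurePreserving.lintegral_comp hg.measurable, ← e.toLinearEquiv.finrank_eq]
  exact hE (hf.comp e.continuous) (hg.comp e.continuous) (fun x => by simp [hf_even _])
    (fun x => by simp [hg_even _]) fun x y => by simpa using H (e x) (e y)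

/-- Symmetrize `f` in the first variable and `g` in the second one. The results are even
in each variable, so the inequality can be applied in `E` and then in `F`. -/
lemma BlaschkeSantalo.lintegral_prod_mul_le (hE : BlaschkeSantalo E) (hF : BlaschkeSantalo F)
    (hE' : PrekopaLeindler E) (hF' : PrekopaLeindler F) {f g : E × F → ℝ≥0∞} {c : ℝ≥0∞}
    (hf : LowerSemicontinuous f) (hg : LowerSemicontinuous g) (hf_even : f.Even) (hg_even : g.Even)
    (H : ∀ x y ξ η, f (x, y) * g (ξ, η) ≤ c * expKernel (⟪x, ξ⟫ + ⟪y, η⟫)) :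
    (∫⁻ z, f z) * ∫⁻ z, g z ≤
      c * ENNReal.ofReal Real.pi ^ (Module.finrank ℝ E + Module.finrank ℝ F) := by
  have hf_swap : LowerSemicontinuous fun q : F × E => f q.swap := hf.comp continuous_swap
  have hf_swap_even : (fun q : F × E => f q.swap).Even := fun q => hf_even q.swap
  set f' : F → E → ℝ≥0∞ := fun y => symmetrize fun x => f (x, y)
  set g' : E → F → ℝ≥0∞ := fun ξ => symmetrize fun η => g (ξ, η)
  have hf'_lsc : LowerSemicontinuous fun q : F × E => f' q.1 q.2 :=
    lowerSemicontinuous_symmetrize (f := fun y x => f (x, y)) hf_swap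
  have hg'_lsc : LowerSemicontinuous fun q : F × E => g' q.2 q.1 :=
    (lowerSemicontinuous_symmetrize (f := fun ξ η => g (ξ, η)) hg).comp continuous_swap
  have hf'_neg (y) : f' (-y) = f' y := symmetrize_neg_left hf_swap_even y
  have hg'_neg (ξ) : g' (-ξ) = g' ξ := symmetrize_neg_left hg_even ξ
  have f_le : ∫⁻ z, f z ≤ ∫⁻ y, ∫⁻ x, f' y x :=
    (Measure.measurePreserving_swap.lintegral_comp hf.measurable).symm.trans_le
      (lintegral_prod_le_lintegral_symmetrize hE' hf_swap)
  have g_le : ∫⁻ z, g z ≤ ∫⁻ η, ∫⁻ ξ, g' ξ η :=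
    (lintegral_prod_le_lintegral_symmetrize hF' hg).trans_eq
      (lintegral_lintegral_swap (f := fun η ξ => g' ξ η) hg'_lsc.measurable.aemeasurable).symm
  have fiber (y η) : (∫⁻ x, f' y x) * ∫⁻ ξ, g' ξ η ≤
      c * ENNReal.ofReal Real.pi ^ Module.finrank ℝ E * expKernel ⟪y, η⟫ := by
    rw [mul_right_comm]
    exact hE (hf'_lsc.comp (Continuous.prodMk_right y)) (hg'_lsc.comp (Continuous.prodMk_right η))
      (symmetrize_even _) (fun ξ => congrFun (hg'_neg ξ) η)
      (symmetrize_mul_symmetrize_le (fun ξ η => hg_even (ξ, η)) H · · y η)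
  calc (∫⁻ z, f z) * ∫⁻ z, g z ≤ (∫⁻ y, ∫⁻ x, f' y x) * ∫⁻ η, ∫⁻ ξ, g' ξ η :=
        mul_le_mul' f_le g_le
    _ ≤ c * ENNReal.ofReal Real.pi ^ Module.finrank ℝ E *
          ENNReal.ofReal Real.pi ^ Module.finrank ℝ F :=
        hF (lowerSemicontinuous_lintegral hf'_lsc) (lowerSemicontinuous_lintegral hg'_lsc)
          (fun y => by simp only [hf'_neg])
          (fun η => lintegral_congr fun ξ => symmetrize_even _ η) fiber
    _ = _ := by rw [pow_add, mul_assoc]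

theorem BlaschkeSantalo.withLp_prod (hE : BlaschkeSantalo E) (hF : BlaschkeSantalo F)
    (hE' : PrekopaLeindler E) (hF' : PrekopaLeindler F) : BlaschkeSantalo (WithLp 2 (E × F)) := by
  intro f g c hf hg hf_even hg_even H
  have toLp_preserving := WithLp.volume_preserving_toLp E F
  have toLp_cont : Continuous (WithLp.toLp 2 : E × F → WithLp 2 (E × F)) := by fun_prop
  rw [← toLp_preserving.lintegral_comp hf.measurable,
    ← toLp_preserving.lintegral_comp hg.measurable,
    (WithLp.linearEquiv 2 ℝ (E × F)).finrank_eq, Module.finrank_prod]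
  exact hE.lintegral_prod_mul_le hF hE' hF' (hf.comp toLp_cont) (hg.comp toLp_cont)
    (fun z => hf_even (WithLp.toLp 2 z)) (fun z => hg_even (WithLp.toLp 2 z))
    fun x y ξ η => by
      simpa [WithLp.prod_inner_apply] using H (WithLp.toLp 2 (x, y)) (WithLp.toLp 2 (ξ, η))

lemma blaschkeSantalo_euclideanSpace_zero : BlaschkeSantalo (EuclideanSpace ℝ (Fin 0)) := by
  intro f g c _ _ _ _ H
  simpa [volume_euclideanSpace_eq_dirac, expKernel_zero] using H 0 0

theorem blaschkeSantalo_euclideanSpace (n : ℕ) : BlaschkeSantalo (EuclideanSpace ℝ (Fin n)) := by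
  induction n with
  | zero => exact blaschkeSantalo_euclideanSpace_zero
  | succ n ih =>
    exact (blaschkeSantalo_real.withLp_prod ih prekopaLeindler_real
      (prekopaLeindler_euclideanSpace n)).of_linearIsometryEquiv
        (isometryOfFinrankEq (finrank_withLp_real_prod_euclideanSpace n))

end BlaschkeSantalo

section ComplexDeterminant

variable {V : Type*} [NormedAddCommGroup V] [NormedSpace ℝ V]

/-- The determinant of `1 + s A` for a complex parameter `s`, that is, the determinant of the
complexification of `1 + s A`. -/
def complexDet (A : V →L[ℝ] V) (s : ℂ) : ℂ :=
  LinearMap.det (1 + s • (A : V →ₗ[ℝ] V).baseChange ℂ)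

lemma complexDet_eq_det_toMatrix {ι : Type*} [Fintype ι] [DecidableEq ι] (b : Module.Basis ι ℝ V)
    (A : V →L[ℝ] V) (s : ℂ) :
    complexDet A s =
      (1 + s • (LinearMap.toMatrix b b (A : V →ₗ[ℝ] V)).map (algebraMap ℝ ℂ)).det := by
  rw [complexDet, ← LinearMap.det_toMatrix (Algebra.TensorProduct.basis ℂ b), map_add, map_smul,
    LinearMap.toMatrix_baseChange, LinearMap.toMatrix_one]

variable [FiniteDimensional ℝ V]

lemma complexDet_ofReal (A : V →L[ℝ] V) (s : ℝ) :
    complexDet A s = ((ContinuousLinearMap.id ℝ V + s • A).det : ℝ) := by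
  rw [complexDet, ContinuousLinearMap.det, ← Complex.coe_algebraMap, ← LinearMap.det_baseChange]
  congr 1
  ext v
  simp [TensorProduct.smul_tmul']

lemma continuous_complexDet : Continuous fun p : (V →L[ℝ] V) × ℂ => complexDet p.1 p.2 := by
  let b := Module.finBasis ℝ V
  have hentries : Continuous fun A : V →L[ℝ] V => LinearMap.toMatrix b b (A : V →ₗ[ℝ] V) :=
    LinearMap.continuous_of_finiteDimensional
      ((LinearMap.toMatrix b b).toLinearMap ∘ₗ ContinuousLinearMap.coeLM ℝ)
  simp only [complexDet_eq_det_toMatrix b]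
  have := hentries.comp (continuous_fst (X := V →L[ℝ] V) (Y := ℂ))
  refine Continuous.matrix_det (continuous_const.add (continuous_snd.smul ?_))
  exact this.matrix_map (Complex.continuous_ofReal)

lemma differentiable_complexDet (A : V →L[ℝ] V) : Differentiable ℂ (complexDet A) := by
  simp only [funext fun s => complexDet_eq_det_toMatrix (Module.finBasis ℝ V) A s,
    Matrix.det_apply, Matrix.add_apply, Matrix.smul_apply]
  fun_prop

lemma exists_norm_complexDet_le (k R : ℝ) :
    ∃ M, ∀ A : V →L[ℝ] V, ‖A‖ ≤ k → ∀ s : ℂ, ‖s‖ ≤ R → ‖complexDet A s‖ ≤ M := by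
  obtain ⟨M, hM⟩ := ((isCompact_closedBall (0 : V →L[ℝ] V) k).prod
    (isCompact_closedBall (0 : ℂ) R)).exists_bound_of_continuousOn
    continuous_complexDet.continuousOn
  exact ⟨M, fun A hA s hs => hM (A, s) (by simp [hA, hs])⟩

lemma det_id_add_pos {A : V →L[ℝ] V} (hA : ‖A‖ < 1) :
    0 < (ContinuousLinearMap.id ℝ V + A).det := by
  have hne (t : ℝ) (ht : t ∈ Icc (0 : ℝ) 1) : (ContinuousLinearMap.id ℝ V + t • A).det ≠ 0 := by
    have hlt : ‖-(t • A)‖ < 1 := by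
      rw [norm_neg, norm_smul, Real.norm_of_nonneg ht.1]
      exact (mul_le_of_le_one_left (norm_nonneg A) ht.2).trans_lt hA
    have := (isUnit_one_sub_of_norm_lt_one hlt).map ContinuousLinearMap.toLinearMapRingHom
    simpa [LinearMap.isUnit_iff_isUnit_det, ContinuousLinearMap.det, isUnit_iff_ne_zero,
      ContinuousLinearMap.one_def] using this
  have hcont : Continuous fun t : ℝ => (ContinuousLinearMap.id ℝ V + t • A).det :=
    ContinuousLinearMap.continuous_det.comp (by fun_prop)
  by_contra! hle
  obtain ⟨t, ht, h0⟩ := intermediate_value_Icc' zero_le_one hcont.continuousOn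
    (show (0 : ℝ) ∈ _ from ⟨by simpa using hle, by simp [ContinuousLinearMap.det]⟩)
  exact hne t ht h0

end ComplexDeterminant

section LipschitzPerturbation

variable {V : Type*} [NormedAddCommGroup V] [NormedSpace ℝ V] {T : V → V} {k : NNReal} {s : ℝ}

lemma approximatesLinearOn_add_smul (hT : LipschitzWith k T) :
    ApproximatesLinearOn (fun z => z + s • T z) (ContinuousLinearEquiv.refl ℝ V : V →L[ℝ] V) univ
      (‖s‖₊ * k) := by
  intro x _ y _
  have : x + s • T x - (y + s • T y) - (x - y) = s • (T x - T y) := by module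
  simp only [ContinuousLinearEquiv.coe_refl, ContinuousLinearMap.coe_id', id_eq, this, norm_smul]
  push_cast
  rw [mul_assoc]
  exact mul_le_mul_of_nonneg_left (hT.norm_sub_le x y) (norm_nonneg s)

lemma bijective_add_smul [CompleteSpace V] (hT : LipschitzWith k T) (hs : |s| * k < 1) :
    Function.Bijective fun z => z + s • T z := by
  have happrox := approximatesLinearOn_add_smul (s := s) hT
  have hsmall : Subsingleton V ∨ ‖s‖₊ * k <
      ‖((ContinuousLinearEquiv.refl ℝ V).symm : V →L[ℝ] V)‖₊⁻¹ := by
    refine (subsingleton_or_nontrivial V).imp_right fun _ => ?_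
    have := EMetric.nontrivial_iff_nontrivialTopology.1 ‹Nontrivial V›
    rw [ContinuousLinearEquiv.refl_symm, ContinuousLinearEquiv.coe_refl,
      ContinuousLinearMap.nnnorm_id, inv_one, ← NNReal.coe_lt_coe]
    simpa using hs
  exact ⟨injOn_univ.1 (happrox.injOn hsmall), happrox.surjective hsmall⟩

lemma hasFDerivWithinAt_add_smul_fderiv (T : V → V) (s : ℝ) {z : V}
    (hz : z ∈ {z | DifferentiableAt ℝ T z}) :
    HasFDerivWithinAt (fun z => z + s • T z) (ContinuousLinearMap.id ℝ V + s • fderiv ℝ T z)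
      {z | DifferentiableAt ℝ T z} z :=
  ((hasFDerivAt_id z).add (hz.hasFDerivAt.const_smul s)).hasFDerivWithinAt

variable [FiniteDimensional ℝ V] [MeasurableSpace V] [BorelSpace V]
  (μ : Measure V) [μ.IsAddHaarMeasure]

lemma addHaar_image_eq_zero_of_lipschitzWith {f : V → V} (hf : LipschitzWith k f) {t : Set V}
    (ht : μ t = 0) : μ (f '' t) = 0 := by
  have := isAddHaarMeasure_hausdorffMeasure (E := V)
  refine Measure.absolutelyContinuous_isAddHaarMeasure μ μH[(Module.finrank ℝ V : ℝ)] ?_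
  have hle := hf.hausdorffMeasure_image_le (d := Module.finrank ℝ V) (by positivity) t
  rwa [Measure.absolutelyContinuous_isAddHaarMeasure μH[(Module.finrank ℝ V : ℝ)] μ ht, mul_zero,
    nonpos_iff_eq_zero] at hle

lemma integral_abs_det_fderiv_smul_comp_add_smul {F : Type*} [NormedAddCommGroup F]
    [NormedSpace ℝ F] (hT : LipschitzWith k T) (hs : |s| * k < 1) (g : V → F) :
    ∫ z, |(ContinuousLinearMap.id ℝ V + s • fderiv ℝ T z).det| • g (z + s • T z) ∂μ =
      ∫ z, g z ∂μ := by
  set D := {z | DifferentiableAt ℝ T z}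
  have hD : ∀ᵐ z ∂μ, z ∈ D := hT.ae_differentiableAt
  have hbij := bijective_add_smul hT hs
  have hlip : LipschitzWith (1 + ‖s‖₊ * k) fun z => z + s • T z :=
    LipschitzWith.id.add ((lipschitzWith_smul s).comp hT)
  have himage : ∀ᵐ z ∂μ, z ∈ (fun z => z + s • T z) '' D := by
    change μ (_ '' D)ᶜ = 0
    rw [← image_compl_eq hbij]
    exact addHaar_image_eq_zero_of_lipschitzWith μ hlip hD
  have hchange := integral_image_eq_integral_abs_det_fderiv_smul μ
    (measurableSet_of_differentiableAt ℝ T) (fun z => hasFDerivWithinAt_add_smul_fderiv T s)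
    hbij.injective.injOn g
  rw [Measure.restrict_eq_self_of_ae_mem himage, Measure.restrict_eq_self_of_ae_mem hD] at hchange
  exact hchange.symm

lemma lintegral_abs_det_fderiv_mul_comp_add_smul_le (hT : LipschitzWith k T) (hs : |s| * k < 1)
    (g : V → ℝ≥0∞) :
    ∫⁻ z, ENNReal.ofReal |(ContinuousLinearMap.id ℝ V + s • fderiv ℝ T z).det| * g (z + s • T z) ∂μ
      ≤ ∫⁻ z, g z ∂μ := by
  have hD : ∀ᵐ z ∂μ, z ∈ {z | DifferentiableAt ℝ T z} := hT.ae_differentiableAt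
  refine le_trans (le_of_eq ?_)
    (setLIntegral_le_lintegral ((fun z => z + s • T z) '' {z | DifferentiableAt ℝ T z}) g)
  rw [lintegral_image_eq_lintegral_abs_det_fderiv_mul μ (measurableSet_of_differentiableAt ℝ T)
    (fun z => hasFDerivWithinAt_add_smul_fderiv T s) (bijective_add_smul hT hs).injective.injOn,
    Measure.restrict_eq_self_of_ae_mem hD]

end LipschitzPerturbation

section HolomorphicIntegral

variable {α : Type*} [MeasurableSpace α] {μ : Measure α} {F : ℂ → α → ℂ} {U : Set ℂ} {bound : α → ℝ}

lemma differentiableOn_integral_of_norm_le (hU : IsOpen U)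
    (hmeas : ∀ s, AEStronglyMeasurable (F s) μ)
    (hdiff : ∀ a, DifferentiableOn ℂ (fun s => F s a) U)
    (hle : ∀ s ∈ U, ∀ a, ‖F s a‖ ≤ bound a) (hint : Integrable bound μ) :
    DifferentiableOn ℂ (fun s => ∫ a, F s a ∂μ) U := by
  intro s₀ hs₀
  obtain ⟨r, hr, hball⟩ := nhds_basis_closedBall.mem_iff.1 (hU.mem_nhds hs₀)
  have hderiv {s : ℂ} (hs : s ∈ ball s₀ (r / 2)) (a : α) :
      HasDerivAt (fun s => F s a) (deriv (fun s => F s a) s) s := by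
    refine ((hdiff a).differentiableAt (hU.mem_nhds (hball ?_))).hasDerivAt
    exact (ball_subset_ball (half_le_self hr.le)).trans ball_subset_closedBall hs
  have hs₀_mem : s₀ ∈ ball s₀ (r / 2) := mem_ball_self (half_pos hr)
  have hsub {s : ℂ} (hs : s ∈ ball s₀ (r / 2)) : closedBall s (r / 2) ⊆ U :=
    (closedBall_subset_closedBall' (by linarith [mem_ball.1 hs])).trans hball
  have hcauchy (a : α) (s : ℂ) (hs : s ∈ ball s₀ (r / 2)) :
      ‖deriv (fun s => F s a) s‖ ≤ bound a / (r / 2) := by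
    refine Complex.norm_deriv_le_of_forall_mem_sphere_norm_le (half_pos hr) ?_ fun w hw =>
      hle w (hsub hs (sphere_subset_closedBall hw)) a
    exact ((hdiff a).mono (hsub hs)).diffContOnCl_ball subset_rfl
  have hderiv_meas : AEStronglyMeasurable (fun a => deriv (fun s => F s a) s₀) μ := by
    refine aestronglyMeasurable_of_tendsto_ae (nhdsWithin s₀ {s₀}ᶜ)
      (f := fun s a => slope (fun s => F s a) s₀ s) (fun s => ?_) (.of_forall fun a => ?_)
    · simp only [slope_def_module]
      exact ((hmeas s).sub (hmeas s₀)).const_smul (s - s₀)⁻¹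
    · exact hasDerivAt_iff_tendsto_slope.1 (hderiv hs₀_mem a)
  exact (hasDerivAt_integral_of_dominated_loc_of_deriv_le (ball_mem_nhds s₀ (half_pos hr))
    (.of_forall hmeas) (hint.mono' (hmeas s₀) (.of_forall (hle s₀ hs₀))) hderiv_meas
    (.of_forall hcauchy) (hint.div_const _)
    (.of_forall fun a s hs => hderiv hs a)).2.differentiableAt.differentiableWithinAt

end HolomorphicIntegral

section GaussianShift

variable {V : Type*} [NormedAddCommGroup V] [InnerProductSpace ℝ V]
  {T : V → V} {k : NNReal} {b δ : ℝ} {s : ℂ}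

/-- The pullback of the Gaussian density `exp (-b ‖z‖²)` under the map `z ↦ z + s T z`, continued
analytically from real to complex `s`. -/
def shiftedGaussian (b : ℝ) (T : V → V) (s : ℂ) (z : V) : ℂ :=
  Complex.exp (-b * (‖z‖ ^ 2 + 2 * s * ⟪z, T z⟫ + s ^ 2 * ‖T z‖ ^ 2)) *
    complexDet (fderiv ℝ T z) s

lemma norm_shiftedGaussian (b : ℝ) (T : V → V) (s : ℂ) (z : V) :
    ‖shiftedGaussian b T s z‖ =
      Real.exp (-b * (‖z‖ ^ 2 + 2 * s.re * ⟪z, T z⟫ + (s.re ^ 2 - s.im ^ 2) * ‖T z‖ ^ 2)) *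
        ‖complexDet (fderiv ℝ T z) s‖ := by
  rw [shiftedGaussian, norm_mul, Complex.norm_exp]
  congr 2
  simp [sq, -neg_mul]

lemma sq_mul_norm_sq_le_of_lipschitzWith (hT : LipschitzWith k T) (h0 : T 0 = 0) (hδ : 0 ≤ δ)
    (hs : (|s.re| + |s.im|) * k ≤ 1 - δ) (z : V) :
    δ ^ 2 * ‖z‖ ^ 2 ≤
      ‖z‖ ^ 2 + 2 * s.re * ⟪z, T z⟫ + (s.re ^ 2 - s.im ^ 2) * ‖T z‖ ^ 2 := by
  have hinner : -(|s.re| * (‖z‖ * ‖T z‖)) ≤ s.re * ⟪z, T z⟫ := by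
    refine (abs_le.1 ?_).1
    rw [abs_mul]
    exact mul_le_mul_of_nonneg_left (abs_real_inner_le_norm z (T z)) (abs_nonneg _)
  have hgap : δ * ‖z‖ + |s.im| * ‖T z‖ ≤ ‖z‖ - |s.re| * ‖T z‖ := by
    have hTz : ‖T z‖ ≤ k * ‖z‖ := by simpa [h0] using hT.norm_sub_le z 0
    have := mul_le_mul_of_nonneg_left hTz (add_nonneg (abs_nonneg s.re) (abs_nonneg s.im))
    have := mul_le_mul_of_nonneg_right hs (norm_nonneg z)
    linarith
  have hsq := mul_self_le_mul_self (by positivity) hgap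
  have : 0 ≤ δ * ‖z‖ * (|s.im| * ‖T z‖) := by positivity
  rw [← sq_abs s.re, ← sq_abs s.im]
  linarith

lemma shiftedGaussian_zero (b : ℝ) (T : V → V) (z : V) :
    shiftedGaussian b T 0 z = (Real.exp (-b * ‖z‖ ^ 2) : ℝ) := by
  simp [shiftedGaussian, complexDet]

variable [FiniteDimensional ℝ V]

lemma differentiable_shiftedGaussian (b : ℝ) (T : V → V) (z : V) :
    Differentiable ℂ fun s => shiftedGaussian b T s z := by
  have := differentiable_complexDet (fderiv ℝ T z)
  unfold shiftedGaussian
  fun_prop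

lemma exists_norm_shiftedGaussian_le (hT : LipschitzWith k T) (h0 : T 0 = 0) (hb : 0 ≤ b)
    (hδ : 0 ≤ δ) (R : ℝ) :
    ∃ M, ∀ s : ℂ, (|s.re| + |s.im|) * k ≤ 1 - δ → ‖s‖ ≤ R → ∀ z,
      ‖shiftedGaussian b T s z‖ ≤ Real.exp (-(b * δ ^ 2) * ‖z‖ ^ 2) * M := by
  obtain ⟨M, hM⟩ := exists_norm_complexDet_le (V := V) k R
  refine ⟨M, fun s hs hR z => ?_⟩
  rw [norm_shiftedGaussian]
  have hdet := hM (fderiv ℝ T z) (norm_fderiv_le_of_lipschitz ℝ hT) s hR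
  have hexp := mul_le_mul_of_nonneg_left (sq_mul_norm_sq_le_of_lipschitzWith hT h0 hδ hs z) hb
  refine mul_le_mul (Real.exp_le_exp.2 ?_) hdet (norm_nonneg _) (Real.exp_pos _).le
  linarith

lemma shiftedGaussian_ofReal (hT : LipschitzWith k T) (b : ℝ) {s : ℝ} (hs : |s| * k < 1) (z : V) :
    shiftedGaussian b T s z =
      |(ContinuousLinearMap.id ℝ V + s • fderiv ℝ T z).det| •
        shiftedGaussian b T 0 (z + s • T z) := by
  have hpos : 0 < (ContinuousLinearMap.id ℝ V + s • fderiv ℝ T z).det := by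
    refine det_id_add_pos (lt_of_le_of_lt ?_ hs)
    rw [norm_smul, Real.norm_eq_abs]
    exact mul_le_mul_of_nonneg_left (norm_fderiv_le_of_lipschitz ℝ hT) (abs_nonneg s)
  rw [shiftedGaussian_zero, shiftedGaussian, complexDet_ofReal, abs_of_pos hpos, norm_add_sq_real,
    norm_smul, mul_pow, Real.norm_eq_abs, sq_abs, real_inner_smul_right, Complex.real_smul,
    mul_comm]
  push_cast
  ring_nf

variable [MeasurableSpace V] [BorelSpace V]

lemma measurable_shiftedGaussian (b : ℝ) (hT : Continuous T) (s : ℂ) :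
    Measurable (shiftedGaussian b T s) := by
  have hdet : Measurable fun z => complexDet (fderiv ℝ T z) s :=
    (continuous_complexDet.comp (Continuous.prodMk_left s)).measurable.comp (measurable_fderiv ℝ T)
  unfold shiftedGaussian
  fun_prop

variable (V) in
lemma integrable_exp_neg_mul_sq_norm (hb : 0 < b) :
    Integrable fun z : V => Real.exp (-b * ‖z‖ ^ 2) := by
  have := (GaussianFourier.integrable_cexp_neg_mul_sq_norm_add (V := V) (b := b)
    (by simpa using hb) 0 0).norm
  simpa [Complex.norm_exp, ← Complex.ofReal_pow] using this

lemma integral_shiftedGaussian_ofReal (hT : LipschitzWith k T) (b : ℝ) {s : ℝ}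
    (hs : |s| * k < 1) :
    ∫ z, shiftedGaussian b T s z = ∫ z, shiftedGaussian b T 0 z := by
  simp only [shiftedGaussian_ofReal hT b hs]
  exact integral_abs_det_fderiv_smul_comp_add_smul volume hT hs _

lemma frequently_integral_shiftedGaussian_eq (hT : LipschitzWith k T) (b : ℝ) :
    ∃ᶠ s in nhdsWithin (0 : ℂ) {0}ᶜ,
      ∫ z, shiftedGaussian b T s z = ∫ z, shiftedGaussian b T 0 z := by
  have hlim : Filter.Tendsto ((↑) : ℝ → ℂ) (nhdsWithin 0 {0}ᶜ) (nhdsWithin 0 {0}ᶜ) := by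
    simpa using (Complex.continuous_ofReal.continuousWithinAt (s := {0}ᶜ) (x := 0))
      |>.tendsto_nhdsWithin fun s hs => Complex.ofReal_ne_zero.2 hs
  have hsmall : ∀ᶠ s : ℝ in nhdsWithin 0 {0}ᶜ, |s| * k < 1 :=
    nhdsWithin_le_nhds (ContinuousAt.eventually_lt (by fun_prop) continuousAt_const (by simp))
  exact hlim.frequently
    (hsmall.mono fun s hs => integral_shiftedGaussian_ofReal hT b hs).frequently

theorem integral_shiftedGaussian_I (hT : LipschitzWith k T) (hk : k < 1) (h0 : T 0 = 0)
    (hb : 0 < b) :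
    ∫ z, shiftedGaussian b T Complex.I z = ∫ z, shiftedGaussian b T 0 z := by
  obtain ⟨δ, hδ, hkδ⟩ : ∃ δ : ℝ, 0 < δ ∧ (k : ℝ) = 1 - 4 * δ :=
    ⟨(1 - k) / 4, by linarith [NNReal.coe_lt_one.2 hk], by ring⟩
  set U : Set ℂ := Ioo (-δ) δ ×ℂ Ioo (-(1 + δ)) (1 + δ)
  have hU_open : IsOpen U := isOpen_Ioo.reProdIm isOpen_Ioo
  have hU_conn : IsPreconnected U :=
    (((convex_Ioo _ _).linear_preimage Complex.reLm).inter
      ((convex_Ioo _ _).linear_preimage Complex.imLm)).isPreconnected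
  have hU_zero : (0 : ℂ) ∈ U :=
    ⟨⟨neg_lt_zero.2 hδ, hδ⟩, show (0 : ℝ) ∈ Ioo _ _ by constructor <;> linarith⟩
  have hU_I : Complex.I ∈ U :=
    ⟨⟨neg_lt_zero.2 hδ, hδ⟩, show (1 : ℝ) ∈ Ioo _ _ by constructor <;> linarith⟩
  have hU_gap (s : ℂ) (hs : s ∈ U) : (|s.re| + |s.im|) * k ≤ 1 - δ := by
    have hre : |s.re| < δ := abs_lt.2 hs.1
    have him : |s.im| < 1 + δ := abs_lt.2 hs.2
    rw [hkδ]
    nlinarith [(hkδ ▸ k.2 : (0 : ℝ) ≤ 1 - 4 * δ)]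
  have hU_bdd (s : ℂ) (hs : s ∈ U) : ‖s‖ ≤ 1 + 2 * δ := by
    linarith [Complex.norm_le_abs_re_add_abs_im s, abs_lt.2 hs.1, abs_lt.2 hs.2]
  obtain ⟨M, hM⟩ := exists_norm_shiftedGaussian_le hT h0 hb.le hδ.le (1 + 2 * δ)
  have hanalytic : AnalyticOnNhd ℂ (fun s => ∫ z, shiftedGaussian b T s z) U :=
    (differentiableOn_integral_of_norm_le hU_open
      (fun s => (measurable_shiftedGaussian b hT.continuous s).aestronglyMeasurable)
      (fun z => (differentiable_shiftedGaussian b T z).differentiableOn)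
      (fun s hs => hM s (hU_gap s hs) (hU_bdd s hs))
      ((integrable_exp_neg_mul_sq_norm V (by positivity)).mul_const M)).analyticOnNhd hU_open
  exact hanalytic.eqOn_of_preconnected_of_frequently_eq analyticOnNhd_const hU_conn
    hU_zero (frequently_integral_shiftedGaussian_eq hT b) hU_I

theorem ofReal_rpow_pi_div_le_lintegral (hT : LipschitzWith k T) (hk : k < 1) (h0 : T 0 = 0)
    (hb : 0 < b) :
    ENNReal.ofReal ((Real.pi / b) ^ (Module.finrank ℝ V / 2 : ℝ)) ≤
      ∫⁻ z, ENNReal.ofReal (Real.exp (-b * (‖z‖ ^ 2 - ‖T z‖ ^ 2)) *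
        ‖complexDet (fderiv ℝ T z) Complex.I‖) := by
  calc ENNReal.ofReal ((Real.pi / b) ^ (Module.finrank ℝ V / 2 : ℝ))
      = ‖∫ z, shiftedGaussian b T 0 z‖ₑ := by
        simp only [shiftedGaussian_zero]
        rw [integral_complex_ofReal, GaussianFourier.integral_rexp_neg_mul_sq_norm hb,
          ← ofReal_norm, Complex.norm_real, Real.norm_of_nonneg (by positivity)]
    _ = ‖∫ z, shiftedGaussian b T Complex.I z‖ₑ := by rw [integral_shiftedGaussian_I hT hk h0 hb]
    _ ≤ ∫⁻ z, ‖shiftedGaussian b T Complex.I z‖ₑ := enorm_integral_le_lintegral_enorm _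
    _ = _ := lintegral_congr fun z => by
        rw [← ofReal_norm, norm_shiftedGaussian]
        simp [sub_eq_add_neg]

end GaussianShift

section CrossMap

variable {E : Type*} [NormedAddCommGroup E] [InnerProductSpace ℝ E] {c : E → E} {k : NNReal}
  {b σ : ℝ}

/-- The map `(u, v) ↦ (c v, σ c u)` of `E × E`, with its Euclidean structure. It is used with
`σ = -1` and `σ = 1`. -/
def crossMap (σ : ℝ) (c : E → E) (z : WithLp 2 (E × E)) : WithLp 2 (E × E) :=
  WithLp.toLp 2 (c z.snd, σ • c z.fst)

lemma norm_sq_crossMap (hσ : |σ| = 1) (c : E → E) (z : WithLp 2 (E × E)) :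
    ‖crossMap σ c z‖ ^ 2 = ‖c z.snd‖ ^ 2 + ‖c z.fst‖ ^ 2 := by
  rw [WithLp.prod_norm_sq_eq_of_L2]
  simp [crossMap, norm_smul, hσ]

lemma lipschitzWith_crossMap (hσ : |σ| = 1) (hc : LipschitzWith k c) :
    LipschitzWith k (crossMap σ c) := by
  refine LipschitzWith.of_dist_le_mul fun z w => ?_
  rw [dist_eq_norm, dist_eq_norm]
  refine abs_le_of_sq_le_sq' ?_ (by positivity) |>.2
  rw [mul_pow, WithLp.prod_norm_sq_eq_of_L2, WithLp.prod_norm_sq_eq_of_L2]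
  have hsnd := pow_le_pow_left₀ (norm_nonneg _) (hc.norm_sub_le z.snd w.snd) 2
  have hfst := pow_le_pow_left₀ (norm_nonneg _) (hc.norm_sub_le z.fst w.fst) 2
  have hsmul : ‖σ • c z.fst - σ • c w.fst‖ = ‖c z.fst - c w.fst‖ := by
    rw [← smul_sub, norm_smul, Real.norm_eq_abs, hσ, one_mul]
  change ‖c z.snd - c w.snd‖ ^ 2 + ‖σ • c z.fst - σ • c w.fst‖ ^ 2 ≤
    k ^ 2 * (‖z.fst - w.fst‖ ^ 2 + ‖z.snd - w.snd‖ ^ 2)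
  rw [hsmul]
  linarith

/-- The derivative of `crossMap σ c` at `(u, v)`, for `B` and `C` the derivatives of `c` at `v`
and `u`. -/
def crossDeriv (σ : ℝ) (B C : E →L[ℝ] E) : WithLp 2 (E × E) →L[ℝ] WithLp 2 (E × E) :=
  (WithLp.prodContinuousLinearEquiv 2 ℝ E E).symm ∘L
    ((B ∘L ContinuousLinearMap.snd ℝ E E).prod (σ • C ∘L ContinuousLinearMap.fst ℝ E E)) ∘L
      (WithLp.prodContinuousLinearEquiv 2 ℝ E E)

lemma hasFDerivAt_crossMap (σ : ℝ) {z : WithLp 2 (E × E)} (hsnd : DifferentiableAt ℝ c z.snd)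
    (hfst : DifferentiableAt ℝ c z.fst) :
    HasFDerivAt (crossMap σ c) (crossDeriv σ (fderiv ℝ c z.snd) (fderiv ℝ c z.fst)) z := by
  have hprod : HasFDerivAt (fun p : E × E => (c p.2, σ • c p.1)) _ (WithLp.ofLp z) :=
    (hsnd.hasFDerivAt.comp (WithLp.ofLp z) hasFDerivAt_snd).prodMk
      ((hfst.hasFDerivAt.comp (WithLp.ofLp z) hasFDerivAt_fst).const_smul σ)
  exact (WithLp.prodContinuousLinearEquiv 2 ℝ E E).symm.hasFDerivAt.comp z
    (hprod.comp z (WithLp.prodContinuousLinearEquiv 2 ℝ E E).hasFDerivAt)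

lemma toMatrix_crossDeriv {ι : Type*} [Fintype ι] [DecidableEq ι] (e : Module.Basis ι ℝ E) (σ : ℝ)
    (B C : E →L[ℝ] E) :
    LinearMap.toMatrix ((e.prod e).map (WithLp.linearEquiv 2 ℝ (E × E)).symm)
        ((e.prod e).map (WithLp.linearEquiv 2 ℝ (E × E)).symm) (crossDeriv σ B C).toLinearMap =
      Matrix.fromBlocks 0 (LinearMap.toMatrix e e B) (σ • LinearMap.toMatrix e e C) 0 := by
  ext (i | i) (j | j) <;> simp [LinearMap.toMatrix_apply, crossDeriv]

variable [FiniteDimensional ℝ E]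

lemma complexDet_crossDeriv_neg_one_I (B C : E →L[ℝ] E) :
    complexDet (crossDeriv (-1) B C) Complex.I =
      (ContinuousLinearMap.id ℝ (WithLp 2 (E × E)) + crossDeriv 1 B C).det := by
  classical
  let e := Module.finBasis ℝ E
  have hreal := complexDet_ofReal (crossDeriv 1 B C) 1
  rw [one_smul, Complex.ofReal_one] at hreal
  rw [← hreal, complexDet_eq_det_toMatrix ((e.prod e).map (WithLp.linearEquiv 2 ℝ (E × E)).symm),
    complexDet_eq_det_toMatrix ((e.prod e).map (WithLp.linearEquiv 2 ℝ (E × E)).symm),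
    toMatrix_crossDeriv, toMatrix_crossDeriv, ← Matrix.fromBlocks_one]
  simp only [Matrix.fromBlocks_map, Matrix.fromBlocks_smul, Matrix.fromBlocks_add]
  simp only [Matrix.map_zero, map_zero, smul_zero, add_zero, zero_add, Matrix.det_fromBlocks_one₁₁]
  have hneg (M : Matrix (Fin (Module.finrank ℝ E)) (Fin (Module.finrank ℝ E)) ℝ) :
      (-M).map Complex.ofReal = -M.map Complex.ofReal := by
    ext
    simp
  simp [hneg, smul_smul, sub_eq_add_neg]

variable [MeasurableSpace E] [BorelSpace E]

lemma ae_hasFDerivAt_crossMap (hc : LipschitzWith k c) :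
    ∀ᵐ z : WithLp 2 (E × E), ∀ σ,
      HasFDerivAt (crossMap σ c) (crossDeriv σ (fderiv ℝ c z.snd) (fderiv ℝ c z.fst)) z := by
  have hae : ∀ᵐ u : E, DifferentiableAt ℝ c u := hc.ae_differentiableAt
  have hofLp := (WithLp.volume_preserving_ofLp E E).quasiMeasurePreserving
  filter_upwards [(Measure.quasiMeasurePreserving_fst.comp hofLp).ae hae,
    (Measure.quasiMeasurePreserving_snd.comp hofLp).ae hae] with z hfst hsnd σ
  exact hasFDerivAt_crossMap σ hsnd hfst

theorem ofReal_pow_pi_div_le_lintegral_prod (hc : LipschitzWith k c) (hk : k < 1) (h0 : c 0 = 0)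
    (hb : 0 < b) {G : E × E → ℝ≥0∞}
    (hG : ∀ u v, ENNReal.ofReal (Real.exp (-b * (‖u‖ ^ 2 - ‖c u‖ ^ 2 + (‖v‖ ^ 2 - ‖c v‖ ^ 2)))) ≤
      G (u + c v, v + c u)) :
    ENNReal.ofReal ((Real.pi / b) ^ Module.finrank ℝ E) ≤ ∫⁻ p, G p := by
  have hk' : |(1 : ℝ)| * k < 1 := by simpa using hk
  calc ENNReal.ofReal ((Real.pi / b) ^ Module.finrank ℝ E)
      ≤ ∫⁻ z, ENNReal.ofReal (Real.exp (-b * (‖z‖ ^ 2 - ‖crossMap (-1) c z‖ ^ 2)) *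
          ‖complexDet (fderiv ℝ (crossMap (-1) c) z) Complex.I‖) := by
        simpa [(WithLp.linearEquiv 2 ℝ (E × E)).finrank_eq, ← two_mul] using
          ofReal_rpow_pi_div_le_lintegral (lipschitzWith_crossMap (σ := -1) (by simp) hc) hk
            (by simp [crossMap, h0]) hb
    _ ≤ ∫⁻ z, ENNReal.ofReal
          |(ContinuousLinearMap.id ℝ _ + (1 : ℝ) • fderiv ℝ (crossMap 1 c) z).det| *
            G (WithLp.ofLp (z + (1 : ℝ) • crossMap 1 c z)) := by
        refine lintegral_mono_ae ?_
        filter_upwards [ae_hasFDerivAt_crossMap hc] with z hz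
        rw [(hz (-1)).fderiv, (hz 1).fderiv, complexDet_crossDeriv_neg_one_I, one_smul, one_smul,
          mul_comm, ENNReal.ofReal_mul (norm_nonneg _), Complex.norm_real, Real.norm_eq_abs]
        have hnorm : ‖z‖ ^ 2 - ‖crossMap (-1) c z‖ ^ 2 =
            ‖z.fst‖ ^ 2 - ‖c z.fst‖ ^ 2 + (‖z.snd‖ ^ 2 - ‖c z.snd‖ ^ 2) := by
          rw [norm_sq_crossMap (by simp), WithLp.prod_norm_sq_eq_of_L2]
          ring
        have hofLp : WithLp.ofLp (z + crossMap 1 c z) = (z.fst + c z.snd, z.snd + c z.fst) := by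
          simp [crossMap, Prod.ext_iff]
        rw [hnorm, hofLp]
        exact mul_le_mul_right (hG z.fst z.snd) _
    _ ≤ ∫⁻ z : WithLp 2 (E × E), G (WithLp.ofLp z) :=
        lintegral_abs_det_fderiv_mul_comp_add_smul_le volume
          (lipschitzWith_crossMap (σ := 1) (by simp) hc) hk' _
    _ = ∫⁻ p, G p :=
        (WithLp.volume_preserving_ofLp E E).lintegral_comp_emb
          (MeasurableEquiv.toLp 2 (E × E)).symm.measurableEmbedding _

end CrossMap

section Subgradient

variable {E : Type*} [NormedAddCommGroup E] [InnerProductSpace ℝ E] {φ : E → ℝ} {x x' y y' : E}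

/-- `y` is a subgradient of `φ` at `x`. -/
def IsSubgradientAt (φ : E → ℝ) (y x : E) : Prop :=
  ∀ z, φ x + ⟪z - x, y⟫ ≤ φ z

lemma IsSubgradientAt.inner_sub_sub_nonneg (h : IsSubgradientAt φ y x)
    (h' : IsSubgradientAt φ y' x') : 0 ≤ ⟪x - x', y - y'⟫ := by
  have h1 := h x'
  have h2 := h' x
  rw [← neg_sub, inner_neg_left] at h1
  rw [inner_sub_right]
  linarith

lemma real_inner_add_sub_eq_sq_sub_sq (x y : E) : ⟪x + y, x - y⟫ = ‖x‖ ^ 2 - ‖y‖ ^ 2 := by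
  rw [inner_add_left, inner_sub_right, inner_sub_right, real_inner_comm x y,
    real_inner_self_eq_norm_sq, real_inner_self_eq_norm_sq]
  ring

lemma isSubgradientAt_sub_of_forall_le (hφ : ConvexOn ℝ univ φ) {w : E}
    (hmin : ∀ z, φ x + ‖x - w‖ ^ 2 / 2 ≤ φ z + ‖z - w‖ ^ 2 / 2) :
    IsSubgradientAt φ (w - x) x := by
  intro z
  have hsegment (t : ℝ) (ht : t ∈ Ioc 0 1) :
      φ x + ⟪z - x, w - x⟫ ≤ φ z + t * (‖z - x‖ ^ 2 / 2) := by
    have hconv := hφ.2 (mem_univ x) (mem_univ z) (sub_nonneg.2 ht.2) ht.1.le (by ring)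
    have hle := hmin ((1 - t) • x + t • z)
    have hsub : (1 - t) • x + t • z - w = t • (z - x) - (w - x) := by module
    rw [hsub, norm_sub_rev x w, norm_sub_sq_real (t • (z - x)), norm_smul, real_inner_smul_left,
      mul_pow, Real.norm_eq_abs, sq_abs] at hle
    refine le_of_mul_le_mul_left ?_ ht.1
    simp only [smul_eq_mul] at hconv
    linarith
  have hlim : Filter.Tendsto (fun t : ℝ => φ z + t * (‖z - x‖ ^ 2 / 2)) (nhdsWithin 0 (Ioi 0))
      (nhds (φ z)) := by
    refine Filter.Tendsto.mono_left ?_ nhdsWithin_le_nhds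
    exact Continuous.tendsto' (by fun_prop) _ _ (by simp)
  exact ge_of_tendsto hlim (Filter.mem_of_superset (Ioc_mem_nhdsGT one_pos) hsegment)

lemma exists_isSubgradientAt_sub [FiniteDimensional ℝ E] (hφ : ConvexOn ℝ univ φ)
    (hcont : Continuous φ) (hnonneg : ∀ x, 0 ≤ φ x) (w : E) :
    ∃ x, IsSubgradientAt φ (w - x) x := by
  have hcoercive : Filter.Tendsto (fun x => ‖x - w‖ ^ 2 / 2) (Filter.cocompact E) Filter.atTop := by
    simp_rw [← dist_eq_norm]
    exact ((Filter.tendsto_pow_atTop two_ne_zero).comp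
      (tendsto_dist_right_cocompact_atTop w)).atTop_div_const two_pos
  obtain ⟨x, hx⟩ := (show Continuous fun x => φ x + ‖x - w‖ ^ 2 / 2 by fun_prop).exists_forall_le
    (Filter.tendsto_atTop_mono (fun x => le_add_of_nonneg_left (hnonneg x)) hcoercive)
  exact ⟨x, isSubgradientAt_sub_of_forall_le hφ hx⟩

/-- The map `c` is `2 prox - 1`, suitably rescaled. -/
theorem exists_lipschitzWith_isSubgradientAt_sub_add [FiniteDimensional ℝ E]
    (hφ : ConvexOn ℝ univ φ) (hcont : Continuous φ) (hnonneg : ∀ x, 0 ≤ φ x) (hzero : φ 0 = 0) :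
    ∃ c : E → E, LipschitzWith 1 c ∧ c 0 = 0 ∧ ∀ u, IsSubgradientAt φ (u - c u) (u + c u) := by
  choose prox hprox using fun u => exists_isSubgradientAt_sub hφ hcont hnonneg ((2 : ℝ) • u)
  set c : E → E := fun u => prox u - u with hc
  have hsub (u : E) : IsSubgradientAt φ (u - c u) (u + c u) := by
    convert hprox u using 1 <;> simp only [hc] <;> module
  refine ⟨c, LipschitzWith.of_dist_le_mul fun u v => ?_, ?_, hsub⟩
  · have hmono : 0 ≤ ⟪u - v + (c u - c v), u - v - (c u - c v)⟫ := by
      convert (hsub u).inner_sub_sub_nonneg (hsub v) using 2 <;> abel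
    rw [real_inner_add_sub_eq_sq_sub_sq, sub_nonneg] at hmono
    simpa [dist_eq_norm] using (abs_le_of_sq_le_sq' hmono (norm_nonneg _)).2
  · have h0 := hsub 0 0
    simp only [zero_add, zero_sub, inner_neg_neg, real_inner_self_eq_norm_sq, hzero] at h0
    have : ‖c 0‖ ^ 2 = 0 := le_antisymm (by linarith [hnonneg (c 0)]) (sq_nonneg _)
    simpa using this

end Subgradient

/-- A centrally symmetric convex body. In finite dimension the condition `K ∈ nhds 0` is equivalent
to `K` having nonempty interior. -/
structure IsSymmetricBody {E : Type*} [NormedAddCommGroup E] [NormedSpace ℝ E] (K : Set E) :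
    Prop where
  isCompact : IsCompact K
  convex : Convex ℝ K
  mem_nhds_zero : K ∈ nhds 0
  neg_mem : ∀ ⦃x⦄, x ∈ K → -x ∈ K

namespace IsSymmetricBody

section Gauge

variable {E : Type*} [NormedAddCommGroup E] [NormedSpace ℝ E] {K L : Set E} {x : E}

lemma zero_mem (hK : IsSymmetricBody K) : 0 ∈ K :=
  mem_of_mem_nhds hK.mem_nhds_zero

protected lemma balanced (hK : IsSymmetricBody K) : Balanced ℝ K :=
  (balanced_iff_neg_mem hK.convex).2 hK.neg_mem

protected lemma absorbent (hK : IsSymmetricBody K) : Absorbent ℝ K :=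
  absorbent_nhds_zero hK.mem_nhds_zero

protected lemma add (hK : IsSymmetricBody K) (hL : IsSymmetricBody L) :
    IsSymmetricBody (K + L) where
  isCompact := hK.isCompact.add hL.isCompact
  convex := hK.convex.add hL.convex
  mem_nhds_zero := Filter.mem_of_superset hL.mem_nhds_zero fun x hx =>
    ⟨0, hK.zero_mem, x, hx, zero_add x⟩
  neg_mem := by
    rintro _ ⟨x, hx, y, hy, rfl⟩
    exact ⟨-x, hK.neg_mem hx, -y, hL.neg_mem hy, (neg_add x y).symm⟩

protected lemma inter (hK : IsSymmetricBody K) (hL : IsSymmetricBody L) :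
    IsSymmetricBody (K ∩ L) where
  isCompact := hK.isCompact.inter hL.isCompact
  convex := hK.convex.inter hL.convex
  mem_nhds_zero := Filter.inter_mem hK.mem_nhds_zero hL.mem_nhds_zero
  neg_mem _ hx := ⟨hK.neg_mem hx.1, hL.neg_mem hx.2⟩

protected lemma smul (hK : IsSymmetricBody K) {a : ℝ} (ha : a ≠ 0) : IsSymmetricBody (a • K) where
  isCompact := hK.isCompact.smul a
  convex := hK.convex.smul a
  mem_nhds_zero := (set_smul_mem_nhds_zero_iff ha).2 hK.mem_nhds_zero
  neg_mem := by
    rintro _ ⟨x, hx, rfl⟩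
    exact ⟨-x, hK.neg_mem hx, smul_neg a x⟩

lemma sub_self_eq (hK : IsSymmetricBody K) : K - K = (2 : ℝ) • K := by
  have hneg : -K = K := by
    ext x
    exact ⟨fun hx => neg_neg x ▸ hK.neg_mem hx, fun hx => hK.neg_mem hx⟩
  have hadd := hK.convex.add_smul zero_le_one zero_le_one
  rw [one_smul, one_add_one_eq_two] at hadd
  rw [sub_eq_add_neg, hneg, hadd]

lemma gauge_le_one_iff (hK : IsSymmetricBody K) : gauge K x ≤ 1 ↔ x ∈ K := by
  rw [gauge_le_one_iff_mem_closure hK.convex hK.mem_nhds_zero, hK.isCompact.isClosed.closure_eq]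

lemma eq_zero_of_gauge_eq_zero (hK : IsSymmetricBody K) (hx : gauge K x = 0) : x = 0 :=
  (gauge_eq_zero hK.absorbent
    (NormedSpace.isVonNBounded_iff ℝ |>.2 hK.isCompact.isBounded)).1 hx

lemma gauge_inv_smul_mem (hK : IsSymmetricBody K) (hx : gauge K x ≠ 0) :
    (gauge K x)⁻¹ • x ∈ K := by
  rw [← hK.gauge_le_one_iff, gauge_smul hK.balanced, norm_inv,
    Real.norm_of_nonneg (gauge_nonneg x), inv_mul_cancel₀ hx]

protected lemma continuous_gauge (hK : IsSymmetricBody K) : Continuous (gauge K) :=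
  _root_.continuous_gauge hK.convex hK.mem_nhds_zero

lemma convexOn_gauge_sq (hK : IsSymmetricBody K) : ConvexOn ℝ univ fun x => gauge K x ^ 2 :=
  (gaugeSeminorm hK.balanced hK.convex hK.absorbent).convexOn.pow (fun x _ => gauge_nonneg x) 2

lemma gauge_add_sq_le (hK : IsSymmetricBody K) (x y : E) :
    gauge K (x + y) ^ 2 ≤ 2 * (gauge K x ^ 2 + gauge K y ^ 2) :=
  (pow_le_pow_left₀ (gauge_nonneg _) (gauge_add_le hK.convex hK.absorbent x y) 2).trans add_sq_le

lemma exists_norm_le_mul_gauge (hK : IsSymmetricBody K) :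
    ∃ R > 0, ∀ x, ‖x‖ ≤ R * gauge K x := by
  obtain ⟨R, hR, hKR⟩ := hK.isCompact.isBounded.subset_closedBall_lt 0 0
  refine ⟨R, hR, fun x => ?_⟩
  rw [← div_le_iff₀' hR]
  exact le_gauge_of_subset_closedBall hK.absorbent hR.le hKR

lemma exists_gauge_sq_le_mul_gauge_sq (hK : IsSymmetricBody K) (hL : IsSymmetricBody L) :
    ∃ M, 0 ≤ M ∧ ∀ x, gauge K x ^ 2 ≤ M * gauge L x ^ 2 := by
  obtain ⟨r, hr, hrK⟩ := Metric.mem_nhds_iff.1 hK.mem_nhds_zero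
  obtain ⟨R, -, hLR⟩ := hL.exists_norm_le_mul_gauge
  refine ⟨(R / r) ^ 2, sq_nonneg _, fun x => ?_⟩
  rw [← mul_pow]
  refine pow_le_pow_left₀ (gauge_nonneg x) ?_ 2
  rw [div_mul_eq_mul_div, le_div_iff₀' hr]
  exact (mul_gauge_le_norm hrK).trans (hLR x)

lemma measure_ne_zero [MeasurableSpace E] {μ : Measure E} [μ.IsOpenPosMeasure]
    (hK : IsSymmetricBody K) : μ K ≠ 0 :=
  (Measure.measure_pos_of_mem_nhds μ hK.mem_nhds_zero).ne'

lemma measure_ne_top [MeasurableSpace E] {μ : Measure E} [IsFiniteMeasureOnCompacts μ]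
    (hK : IsSymmetricBody K) : μ K ≠ ⊤ :=
  hK.isCompact.measure_ne_top

end Gauge

end IsSymmetricBody

section Polar

variable {n : ℕ} {K : Set (Euc n)} {y : Euc n}

lemma isClosed_polarSet (K : Set (Euc n)) : IsClosed (polarSet K) := by
  simp only [polarSet, ofPred_forall]
  exact isClosed_biInter fun x _ => isClosed_le (by fun_prop) continuous_const

lemma convex_polarSet (K : Set (Euc n)) : Convex ℝ (polarSet K) := by
  intro y hy z hz a b ha hb hab x hx
  rw [inner_add_right, real_inner_smul_right, real_inner_smul_right, ← hab]
  exact add_le_add (mul_le_of_le_one_right ha (hy x hx)) (mul_le_of_le_one_right hb (hz x hx))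

lemma isBounded_polarSet (hK : K ∈ nhds 0) : Bornology.IsBounded (polarSet K) := by
  obtain ⟨r, hr, hrK⟩ := Metric.nhds_basis_closedBall.mem_iff.1 hK
  refine isBounded_closedBall (x := 0) (r := r⁻¹) |>.subset fun y hy => ?_
  rw [mem_closedBall_zero_iff]
  rcases eq_or_ne y 0 with rfl | hy0
  · simpa using hr.le
  have hnorm : ‖y‖ ≠ 0 := norm_ne_zero_iff.2 hy0
  have hmem : (r / ‖y‖) • y ∈ K := hrK <| by
    rw [mem_closedBall_zero_iff, norm_smul, norm_div, norm_norm, Real.norm_of_nonneg hr.le,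
      div_mul_cancel₀ r hnorm]
  have hinner := hy _ hmem
  rw [real_inner_smul_left, real_inner_self_eq_norm_mul_norm, ← mul_assoc,
    div_mul_cancel₀ r hnorm] at hinner
  rwa [← one_div, le_div_iff₀' hr]

lemma polarSet_mem_nhds_zero (hK : Bornology.IsBounded K) : polarSet K ∈ nhds 0 := by
  obtain ⟨R, hR, hKR⟩ := hK.subset_closedBall_lt 0 0
  refine Filter.mem_of_superset (closedBall_mem_nhds 0 (inv_pos.2 hR)) fun y hy x hx => ?_
  calc ⟪x, y⟫ ≤ ‖x‖ * ‖y‖ := real_inner_le_norm x y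
    _ ≤ R * R⁻¹ := by
        gcongr
        · exact mem_closedBall_zero_iff.1 (hKR hx)
        · exact mem_closedBall_zero_iff.1 hy
    _ = 1 := mul_inv_cancel₀ hR.ne'

theorem polarSet_polarSet (hclosed : IsClosed K) (hconvex : Convex ℝ K) (hzero : 0 ∈ K) :
    polarSet (polarSet K) = K := by
  refine Subset.antisymm (fun x hx => ?_) fun x hx y hy => real_inner_comm x y ▸ hy x hx
  by_contra hxK
  obtain ⟨f, u, hfK, hfx⟩ := geometric_hahn_banach_closed_point hconvex hclosed hxK
  have hu : 0 < u := by simpa using hfK 0 hzero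
  set y := (InnerProductSpace.toDual ℝ (Euc n)).symm f
  have hf (z : Euc n) : f z = ⟪z, y⟫ := by
    rw [real_inner_comm, InnerProductSpace.toDual_symm_apply]
  have hy : u⁻¹ • y ∈ polarSet K := fun z hz => by
    rw [real_inner_smul_right, ← hf, inv_mul_le_one₀ hu]
    exact (hfK z hz).le
  have hxy := hx _ hy
  rw [real_inner_smul_left, real_inner_comm, ← hf, inv_mul_le_one₀ hu] at hxy
  exact hxy.not_gt hfx

lemma smul_mem_polarSet_of_mem_polarSet_smul {a : ℝ} (hy : y ∈ polarSet (a • K)) :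
    a • y ∈ polarSet K := fun x hx => by
  rw [real_inner_smul_right, ← real_inner_smul_left]
  exact hy _ (smul_mem_smul_set hx)

lemma polarSet_inter_polarSet_subset (K L : Set (Euc n)) :
    polarSet K ∩ polarSet L ⊆ (2 : ℝ) • polarSet (K + L) := by
  rintro z ⟨hzK, hzL⟩
  rw [mem_smul_set_iff_inv_smul_mem₀ two_ne_zero]
  rintro _ ⟨x, hx, y, hy, rfl⟩
  rw [real_inner_smul_right, inner_add_left]
  linarith [hzK x hx, hzL y hy]

lemma volume_polarSet_inter_polarSet_le (K L : Set (Euc n)) :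
    volume (polarSet K ∩ polarSet L) ≤ 2 ^ n * volume (polarSet (K + L)) := by
  refine (measure_mono (polarSet_inter_polarSet_subset K L)).trans_eq ?_
  rw [Measure.addHaar_smul_of_nonneg volume zero_le_two, finrank_euclideanSpace_fin,
    ENNReal.ofReal_pow zero_le_two, ENNReal.ofReal_ofNat]

end Polar

namespace IsSymmetricBody

variable {n : ℕ} {K : Set (Euc n)} {x y : Euc n}

lemma of_isConvexBody (hK : IsConvexBody K) (hneg : K = -K) : IsSymmetricBody K := by
  obtain ⟨hcompact, hconvex, x, hx⟩ := hK
  have hneg_mem (x) (hx : x ∈ K) : -x ∈ K := by rwa [hneg, neg_mem_neg]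
  refine ⟨hcompact, hconvex, ?_, hneg_mem⟩
  have hmid := hconvex.combo_interior_self_mem_interior hx (hneg_mem x (interior_subset hx))
    one_half_pos one_half_pos.le (add_halves 1)
  rwa [smul_neg, add_neg_cancel, mem_interior_iff_mem_nhds] at hmid

protected lemma polarSet (hK : IsSymmetricBody K) : IsSymmetricBody (polarSet K) where
  isCompact := Metric.isCompact_of_isClosed_isBounded (isClosed_polarSet K)
    (isBounded_polarSet hK.mem_nhds_zero)
  convex := convex_polarSet K
  mem_nhds_zero := polarSet_mem_nhds_zero hK.isCompact.isBounded
  neg_mem y hy x hx := by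
    rw [inner_neg_right, ← inner_neg_left]
    exact hy _ (hK.neg_mem hx)

protected theorem polarSet_polarSet (hK : IsSymmetricBody K) : polarSet (polarSet K) = K :=
  _root_.polarSet_polarSet hK.isCompact.isClosed hK.convex hK.zero_mem

lemma inner_le_gauge_mul_gauge (hK : IsSymmetricBody K) (x y : Euc n) :
    ⟪x, y⟫ ≤ gauge K x * gauge (polarSet K) y := by
  by_cases hx : gauge K x = 0
  · simp [hK.eq_zero_of_gauge_eq_zero hx]
  by_cases hy : gauge (polarSet K) y = 0
  · simp [hK.polarSet.eq_zero_of_gauge_eq_zero hy]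
  have hinner := hK.polarSet.gauge_inv_smul_mem hy _ (hK.gauge_inv_smul_mem hx)
  rw [real_inner_smul_left, real_inner_smul_right,
    inv_mul_le_one₀ ((gauge_nonneg x).lt_of_ne' hx)] at hinner
  rwa [inv_mul_le_iff₀ ((gauge_nonneg y).lt_of_ne' hy), mul_comm] at hinner

lemma gauge_polarSet_le {s : ℝ} (hs : 0 ≤ s) (hy : ∀ x ∈ K, ⟪x, y⟫ ≤ s) :
    gauge (polarSet K) y ≤ s := by
  refine le_of_forall_pos_le_add fun ε hε => gauge_le_of_mem (by positivity) ?_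
  rw [mem_smul_set_iff_inv_smul_mem₀ (by positivity)]
  intro x hx
  rw [real_inner_smul_right, inv_mul_le_one₀ (by positivity)]
  linarith [hy x hx]

lemma gauge_sq_add_gauge_sq_le (hK : IsSymmetricBody K)
    (hxy : IsSubgradientAt (fun x => gauge K x ^ 2 / 2) y x) :
    gauge K x ^ 2 + gauge (polarSet K) y ^ 2 ≤ 2 * ⟪x, y⟫ := by
  set s := 2 * ⟪x, y⟫ - gauge K x ^ 2
  have hconj (z : Euc n) : 2 * ⟪z, y⟫ - gauge K z ^ 2 ≤ s := by
    have := hxy z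
    rw [inner_sub_left] at this
    linarith
  have hs0 : 0 ≤ s := by simpa using hconj 0
  have hle : gauge (polarSet K) y ≤ √s := by
    refine gauge_polarSet_le (Real.sqrt_nonneg s) fun z hz => Real.le_sqrt_of_sq_le ?_
    have hz := pow_le_one₀ (n := 2) (gauge_nonneg z) (hK.gauge_le_one_iff.2 hz)
    have hscaled := hconj (⟪z, y⟫ • z)
    rw [real_inner_smul_left, gauge_smul hK.balanced, mul_pow, Real.norm_eq_abs, sq_abs] at hscaled
    linarith [mul_le_of_le_one_right (sq_nonneg ⟪z, y⟫) hz]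
  have hsq := pow_le_pow_left₀ (gauge_nonneg y) hle 2
  rw [Real.sq_sqrt hs0] at hsq
  linarith

lemma exists_lipschitzWith_gauge_sq_add_gauge_sq_le (hK : IsSymmetricBody K) :
    ∃ c : Euc n → Euc n, LipschitzWith 1 c ∧ c 0 = 0 ∧ ∀ u,
      gauge K (u + c u) ^ 2 + gauge (polarSet K) (u - c u) ^ 2 ≤
        2 * (‖u‖ ^ 2 - ‖c u‖ ^ 2) := by
  have hconvex : ConvexOn ℝ univ fun x => gauge K x ^ 2 / 2 := by
    simpa [div_eq_inv_mul] using hK.convexOn_gauge_sq.smul (inv_nonneg.2 zero_le_two)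
  obtain ⟨c, hc, hc0, hsub⟩ := exists_lipschitzWith_isSubgradientAt_sub_add hconvex
    ((hK.continuous_gauge.pow 2).div_const 2) (fun x => by positivity) (by simp)
  refine ⟨c, hc, hc0, fun u => ?_⟩
  rw [← real_inner_add_sub_eq_sq_sub_sq]
  exact hK.gauge_sq_add_gauge_sq_le (hsub u)

/-- Replacing `c` by `τ c` with `τ < 1` close to `1` costs a factor at most `2`, since
`u ± τ c u` is close to `u ± c u`. -/
lemma exists_contraction_gauge_sq_add_gauge_sq_le (hK : IsSymmetricBody K) :
    ∃ (c : Euc n → Euc n) (k : NNReal), LipschitzWith k c ∧ k < 1 ∧ c 0 = 0 ∧ ∀ u,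
      gauge K (u + c u) ^ 2 + gauge (polarSet K) (u - c u) ^ 2 ≤
        4 * (‖u‖ ^ 2 - ‖c u‖ ^ 2) := by
  obtain ⟨c, hc, hc0, hle⟩ := hK.exists_lipschitzWith_gauge_sq_add_gauge_sq_le
  obtain ⟨M, hM, hgM⟩ := hK.exists_gauge_sq_le_mul_gauge_sq hK.polarSet
  obtain ⟨M', hM', hhM'⟩ := hK.polarSet.exists_gauge_sq_le_mul_gauge_sq hK
  set θ := 1 / (M + M' + 2)
  have hθ0 : 0 < θ := by positivity
  have hθ2 : θ * (M + M' + 2) = 1 := one_div_mul_cancel (by positivity)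
  have hθM : 0 ≤ θ * M := by positivity
  have hθM' : 0 ≤ θ * M' := by positivity
  have hτ : |1 - 2 * θ| < 1 := by rw [abs_lt]; constructor <;> linarith
  refine ⟨fun u => (1 - 2 * θ) • c u, ‖1 - 2 * θ‖₊ * 1, (lipschitzWith_smul _).comp hc,
    by simpa [← NNReal.coe_lt_coe] using hτ, by simp [hc0], fun u => ?_⟩
  have hg := hK.convexOn_gauge_sq.2 (mem_univ (u + c u)) (mem_univ (u - c u))
    (by linarith : 0 ≤ 1 - θ) hθ0.le (by ring)
  have hh := hK.polarSet.convexOn_gauge_sq.2 (mem_univ (u - c u)) (mem_univ (u + c u))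
    (by linarith : 0 ≤ 1 - θ) hθ0.le (by ring)
  have hadd : (1 - θ) • (u + c u) + θ • (u - c u) = u + (1 - 2 * θ) • c u := by module
  have hsub : (1 - θ) • (u - c u) + θ • (u + c u) = u - (1 - 2 * θ) • c u := by module
  have hnorm : ‖(1 - 2 * θ) • c u‖ ^ 2 ≤ ‖c u‖ ^ 2 := by
    rw [norm_smul]
    exact pow_le_pow_left₀ (by positivity) (mul_le_of_le_one_left (norm_nonneg _) hτ.le) 2
  rw [hadd, smul_eq_mul, smul_eq_mul] at hg
  rw [hsub, smul_eq_mul, smul_eq_mul] at hh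
  nlinarith [hle u, mul_le_mul_of_nonneg_left (hgM (u - c u)) hθ0.le,
    mul_le_mul_of_nonneg_left (hhM' (u + c u)) hθ0.le, sq_nonneg (gauge K (u + c u)),
    sq_nonneg (gauge (polarSet K) (u - c u))]

end IsSymmetricBody

/-- The density `e^{-‖x‖²}` for the norm `gauge K` with unit ball `K`. -/
def gaugeDensity {n : ℕ} (K : Set (Euc n)) (x : Euc n) : ℝ≥0∞ :=
  ENNReal.ofReal (Real.exp (-gauge K x ^ 2))

/-- The total mass of `gaugeDensity K`. It is a multiple of the volume of `K`, the factor depending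
on the dimension only. -/
def gaugeIntegral {n : ℕ} (K : Set (Euc n)) : ℝ≥0∞ :=
  ∫⁻ x, gaugeDensity K x

lemma lintegral_gaugeDensity_sub_two_smul_le {n : ℕ} (K : Set (Euc n)) (x : Euc n) :
    ∫⁻ y, gaugeDensity K (x - (2 : ℝ) • y) ≤ gaugeIntegral K := by
  refine (lintegral_mono fun y => ?_).trans_eq
    (lintegral_sub_left_eq_self (gaugeDensity K) ((2⁻¹ : ℝ) • x))
  have hgauge : gauge K (x - (2 : ℝ) • y) = 2 * gauge K ((2⁻¹ : ℝ) • x - y) := by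
    rw [← smul_eq_mul, ← gauge_smul_of_nonneg zero_le_two, smul_sub, smul_inv_smul₀ two_ne_zero]
  have := gauge_nonneg (s := K) ((2⁻¹ : ℝ) • x - y)
  rw [gaugeDensity, gaugeDensity, hgauge]
  gcongr
  linarith

namespace IsSymmetricBody

variable {n : ℕ} {K L : Set (Euc n)}

lemma continuous_gaugeDensity (hK : IsSymmetricBody K) : Continuous (gaugeDensity K) :=
  ENNReal.continuous_ofReal.comp (Real.continuous_exp.comp (hK.continuous_gauge.pow 2).neg)

lemma even_gaugeDensity (hK : IsSymmetricBody K) : (gaugeDensity K).Even := fun x => by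
  rw [gaugeDensity, gaugeDensity, gauge_neg hK.neg_mem]

lemma ofReal_pow_pi_div_eight_le_lintegral (hK : IsSymmetricBody K) :
    ENNReal.ofReal ((Real.pi / 8) ^ n) ≤ ∫⁻ z : Euc n × Euc n,
      gaugeDensity K (z.1 + z.2) * gaugeDensity (polarSet K) (z.1 - z.2) := by
  obtain ⟨c, k, hc, hk, h0, hle⟩ := hK.exists_contraction_gauge_sq_add_gauge_sq_le
  conv_lhs => rw [← finrank_euclideanSpace_fin (𝕜 := ℝ) (n := n)]
  refine ofReal_pow_pi_div_le_lintegral_prod hc hk h0 (by norm_num) fun u v => ?_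
  rw [gaugeDensity, gaugeDensity, ← ENNReal.ofReal_mul (by positivity), ← Real.exp_add]
  gcongr
  have hadd : u + c v + (v + c u) = u + c u + (v + c v) := by abel
  have hsub : u + c v - (v + c u) = u - c u + -(v - c v) := by abel
  have hg := hK.gauge_add_sq_le (u + c u) (v + c v)
  have hh := hK.polarSet.gauge_add_sq_le (u - c u) (-(v - c v))
  rw [gauge_neg hK.polarSet.neg_mem] at hh
  rw [hadd, hsub]
  linarith [hle u, hle v]

theorem ofReal_pow_pi_div_eight_le_gaugeIntegral_mul (hK : IsSymmetricBody K) :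
    ENNReal.ofReal ((Real.pi / 8) ^ n) ≤ gaugeIntegral K * gaugeIntegral (polarSet K) := by
  set G := gaugeDensity K
  set H := gaugeDensity (polarSet K)
  have hG : Measurable G := hK.continuous_gaugeDensity.measurable
  have hH : Measurable H := hK.polarSet.continuous_gaugeDensity.measurable
  calc ENNReal.ofReal ((Real.pi / 8) ^ n)
      ≤ ∫⁻ z : Euc n × Euc n, G (z.1 + z.2) * H (z.1 - z.2) :=
        hK.ofReal_pow_pi_div_eight_le_lintegral
    _ = ∫⁻ y, ∫⁻ x, G (x + y) * H (x - y) :=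
        lintegral_prod_symm _ (by fun_prop)
    _ = ∫⁻ y, ∫⁻ x, G x * H (x - (2 : ℝ) • y) := by
        refine lintegral_congr fun y => ?_
        rw [← lintegral_add_right_eq_self (fun x => G x * H (x - (2 : ℝ) • y)) y]
        simp only [two_smul, add_sub_add_right_eq_sub]
    _ = ∫⁻ x, ∫⁻ y, G x * H (x - (2 : ℝ) • y) :=
        lintegral_lintegral_swap (by fun_prop)
    _ ≤ ∫⁻ x, G x * gaugeIntegral (polarSet K) := by
        refine lintegral_mono fun x => ?_
        rw [lintegral_const_mul _ (by fun_prop)]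
        gcongr
        exact lintegral_gaugeDensity_sub_two_smul_le _ x
    _ = gaugeIntegral K * gaugeIntegral (polarSet K) :=
        lintegral_mul_const _ hG

theorem gaugeIntegral_mul_gaugeIntegral_polarSet_le (hK : IsSymmetricBody K) :
    gaugeIntegral K * gaugeIntegral (polarSet K) ≤ ENNReal.ofReal Real.pi ^ n := by
  have hkernel (x y : Euc n) :
      gaugeDensity K x * gaugeDensity (polarSet K) y ≤ 1 * expKernel ⟪x, y⟫ := by
    rw [one_mul, expKernel, gaugeDensity, gaugeDensity, ← ENNReal.ofReal_mul (by positivity),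
      ← Real.exp_add]
    gcongr
    linarith [hK.inner_le_gauge_mul_gauge x y,
      two_mul_le_add_sq (gauge K x) (gauge (polarSet K) y)]
  have hsantalo := blaschkeSantalo_euclideanSpace n
    hK.continuous_gaugeDensity.lowerSemicontinuous
    hK.polarSet.continuous_gaugeDensity.lowerSemicontinuous
    hK.even_gaugeDensity hK.polarSet.even_gaugeDensity hkernel
  rwa [one_mul, finrank_euclideanSpace_fin] at hsantalo

lemma integrable_exp_neg_gauge_sq (hK : IsSymmetricBody K) :
    Integrable fun x : Euc n => Real.exp (-gauge K x ^ 2) := by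
  obtain ⟨R, hR, hKR⟩ := hK.exists_norm_le_mul_gauge
  have hg := hK.continuous_gauge
  refine (integrable_exp_neg_mul_sq_norm (Euc n) (b := (R ^ 2)⁻¹) (by positivity)).mono'
    (by fun_prop) (ae_of_all _ fun x => ?_)
  rw [Real.norm_of_nonneg (Real.exp_nonneg _), Real.exp_le_exp, neg_mul, neg_le_neg_iff,
    inv_mul_le_iff₀ (by positivity), ← mul_pow]
  exact pow_le_pow_left₀ (norm_nonneg x) (hKR x) 2

lemma volume_eq_volume_gauge_lt_one (hK : IsSymmetricBody K) :
    volume K = volume {x | gauge K x < 1} := by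
  rw [setOfPred_gauge_lt_one_eq_interior hK.convex hK.mem_nhds_zero]
  exact (measure_congr (interior_ae_eq_of_null_frontier
    (hK.convex.addHaar_frontier volume))).symm

lemma gaugeIntegral_eq (hK : IsSymmetricBody K) :
    gaugeIntegral K = ENNReal.ofReal (Real.Gamma (n / 2 + 1)) * volume K := by
  have hΓ : 0 < Real.Gamma (n / 2 + 1) := Real.Gamma_pos_of_pos (by positivity)
  have hvol := measure_lt_one_eq_integral_div_gamma (volume : Measure (Euc n)) (g := gauge K)
    gauge_zero (gauge_neg hK.neg_mem) (gauge_add_le hK.convex hK.absorbent)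
    hK.eq_zero_of_gauge_eq_zero (fun a x => (gauge_smul hK.balanced a x).le) two_pos
  simp only [Real.rpow_two, finrank_euclideanSpace_fin] at hvol
  rw [hK.volume_eq_volume_gauge_lt_one, hvol, ← ENNReal.ofReal_mul hΓ.le,
    mul_div_cancel₀ _ hΓ.ne', ofReal_integral_eq_lintegral_ofReal hK.integrable_exp_neg_gauge_sq
      (ae_of_all _ fun x => Real.exp_nonneg _)]
  rfl

/-- The Bourgain–Milman inequality, up to the value of the constant, combined with
Blaschke–Santaló. -/
theorem volume_mul_volume_polarSet_le (hK : IsSymmetricBody K) (hL : IsSymmetricBody L) :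
    volume K * volume (polarSet K) ≤
      8 ^ n * (volume L * volume (polarSet L)) := by
  set Γ := ENNReal.ofReal (Real.Gamma (n / 2 + 1)) with hΓ
  have hΓ0 : Γ * Γ ≠ 0 := by
    simpa [hΓ] using Real.Gamma_pos_of_pos (by positivity : (0 : ℝ) < n / 2 + 1)
  have hΓtop : Γ * Γ ≠ ⊤ := ENNReal.mul_ne_top ENNReal.ofReal_ne_top ENNReal.ofReal_ne_top
  refine (ENNReal.mul_le_mul_iff_right hΓ0 hΓtop).1 ?_
  calc Γ * Γ * (volume K * volume (polarSet K))
      = gaugeIntegral K * gaugeIntegral (polarSet K) := by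
        rw [hK.gaugeIntegral_eq, hK.polarSet.gaugeIntegral_eq, mul_mul_mul_comm]
    _ ≤ ENNReal.ofReal Real.pi ^ n := hK.gaugeIntegral_mul_gaugeIntegral_polarSet_le
    _ = 8 ^ n * ENNReal.ofReal ((Real.pi / 8) ^ n) := by
        rw [ENNReal.ofReal_pow (by positivity), ← mul_pow,
          ENNReal.ofReal_div_of_pos (by norm_num), ENNReal.ofReal_ofNat,
          ENNReal.mul_div_cancel (by norm_num) (by norm_num)]
    _ ≤ 8 ^ n * (gaugeIntegral L * gaugeIntegral (polarSet L)) := by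
        gcongr
        exact hL.ofReal_pow_pi_div_eight_le_gaugeIntegral_mul
    _ = Γ * Γ * (8 ^ n * (volume L * volume (polarSet L))) := by
        rw [hL.gaugeIntegral_eq, hL.polarSet.gaugeIntegral_eq]
        ring

end IsSymmetricBody

section Covering

/-- The translates of `A` by a maximal set of points of `C` for which they are disjoint. -/
lemma exists_subset_iUnion_vadd_sub_and_mul_measure_le {G : Type*} [AddCommGroup G]
    [MeasurableSpace G] [MeasurableAdd G] {μ : Measure G} [μ.IsAddLeftInvariant] {A C : Set G}
    (hA : MeasurableSet A) (hA0 : μ A ≠ 0) (hCA : μ (C + A) ≠ ⊤) :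
    ∃ (m : ℕ) (x : Fin m → G), C ⊆ ⋃ i, x i +ᵥ (A - A) ∧ m * μ A ≤ μ (C + A) := by
  have hne : A.Nonempty := nonempty_of_measure_ne_zero hA0
  obtain ⟨u, huC, hdisj, hmeet⟩ := Vitali.exists_disjoint_subfamily_covering_enlargement
    (fun x : G => x +ᵥ A) C (fun _ => 0) 2 one_lt_two (fun _ _ => le_rfl) 0 (fun _ _ => le_rfl)
    fun x _ => hne.vadd_set
  have hcard : (ENat.card u : ℝ≥0∞) * μ A ≤ μ (C + A) := calc
    (ENat.card u : ℝ≥0∞) * μ A = ∑' x : u, μ ((x : G) +ᵥ A) := by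
      simp only [measure_vadd, ENNReal.tsum_const]
    _ ≤ μ (⋃ x : u, (x : G) +ᵥ A) :=
      tsum_meas_le_meas_iUnion_of_disjoint μ (fun x => hA.const_vadd (x : G))
        fun x y hxy => hdisj x.2 y.2 (Subtype.coe_ne_coe.2 hxy)
    _ ≤ μ (C + A) := measure_mono <| iUnion_subset fun x => by
      rintro _ ⟨a, ha, rfl⟩
      exact add_mem_add (huC x.2) ha
  have hfinite : Finite u := by
    by_contra hinf
    rw [not_finite_iff_infinite] at hinf
    rw [ENat.card_eq_top_of_infinite, ENat.toENNReal_top, ENNReal.top_mul hA0, top_le_iff] at hcard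
    exact hCA hcard
  refine ⟨Nat.card u, fun i => ((Finite.equivFin u).symm i : G), fun z hz => ?_, ?_⟩
  · obtain ⟨x, hx, ⟨_, ⟨a, ha, rfl⟩, a', ha', haa'⟩, -⟩ := hmeet z hz
    refine mem_iUnion.2 ⟨Finite.equivFin u ⟨x, hx⟩, a' - a, sub_mem_sub ha' ha, ?_⟩
    simp only [vadd_eq_add] at haa'
    simp only [Equiv.symm_apply_apply, vadd_eq_add]
    rw [← add_sub_assoc, haa', add_sub_cancel_right]
  · simpa only [ENat.card_eq_coe_natCard, ENat.toENNReal_coe] using hcard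

variable {E : Type*} [NormedAddCommGroup E] [NormedSpace ℝ E] [FiniteDimensional ℝ E]
  [MeasurableSpace E] [BorelSpace E] {μ : Measure E} [μ.IsAddHaarMeasure] {B C K L : Set E}

namespace IsSymmetricBody

lemma exists_subset_iUnion_vadd_and_mul_measure_le (hC : IsSymmetricBody C)
    (hB : IsSymmetricBody B) :
    ∃ (m : ℕ) (x : Fin m → E), C ⊆ ⋃ i, x i +ᵥ B ∧
      m * μ B ≤ 2 ^ Module.finrank ℝ E * μ (C + B) := by
  set A := (2⁻¹ : ℝ) • B
  have hAbody : IsSymmetricBody A := hB.smul (inv_ne_zero two_ne_zero)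
  have hAB : (2 : ℝ) • A = B := smul_inv_smul₀ two_ne_zero B
  have hμB : μ B = 2 ^ Module.finrank ℝ E * μ A := by
    rw [← hAB, Measure.addHaar_smul_of_nonneg μ zero_le_two,
      ENNReal.ofReal_pow zero_le_two, ENNReal.ofReal_ofNat]
  obtain ⟨m, x, hcover, hcard⟩ := exists_subset_iUnion_vadd_sub_and_mul_measure_le
    hAbody.isCompact.measurableSet hAbody.measure_ne_zero (hC.add hAbody).measure_ne_top (μ := μ)
  rw [hAbody.sub_self_eq, hAB] at hcover
  refine ⟨m, x, hcover, ?_⟩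
  have hAsub : A ⊆ B := hB.balanced _ (by norm_num)
  calc m * μ B = 2 ^ Module.finrank ℝ E * (m * μ A) := by rw [hμB]; ring
    _ ≤ 2 ^ Module.finrank ℝ E * μ (C + A) := by gcongr
    _ ≤ 2 ^ Module.finrank ℝ E * μ (C + B) := by gcongr

lemma measure_vadd_inter_le (hK : IsSymmetricBody K) (hL : IsSymmetricBody L) (x : E) :
    μ ((x +ᵥ L) ∩ K) ≤ 2 ^ Module.finrank ℝ E * μ (L ∩ K) := by
  rcases ((x +ᵥ L) ∩ K).eq_empty_or_nonempty with hempty | ⟨_, ⟨b, hb, rfl⟩, hz⟩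
  · simp [hempty]
  have hsub : (x +ᵥ L) ∩ K ⊆ (x + b) +ᵥ (2 : ℝ) • (L ∩ K) := by
    rw [smul_set_inter₀ two_ne_zero, ← hK.sub_self_eq, ← hL.sub_self_eq]
    rintro _ ⟨⟨a, ha, rfl⟩, hw⟩
    refine ⟨a - b, ⟨sub_mem_sub ha hb, ?_⟩, ?_⟩
    · simpa using sub_mem_sub hw hz
    · simp [add_assoc]
  calc μ ((x +ᵥ L) ∩ K) ≤ μ ((x + b) +ᵥ (2 : ℝ) • (L ∩ K)) := measure_mono hsub
    _ = 2 ^ Module.finrank ℝ E * μ (L ∩ K) := by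
        rw [measure_vadd, Measure.addHaar_smul_of_nonneg μ zero_le_two,
          ENNReal.ofReal_pow zero_le_two, ENNReal.ofReal_ofNat]

lemma measure_le_of_subset_iUnion_vadd (hK : IsSymmetricBody K) (hL : IsSymmetricBody L) {m : ℕ}
    {x : Fin m → E} (hcover : K ⊆ ⋃ i, x i +ᵥ L) :
    μ K ≤ m * (2 ^ Module.finrank ℝ E * μ (L ∩ K)) :=
  calc μ K ≤ μ (⋃ i, (x i +ᵥ L) ∩ K) :=
        measure_mono (iUnion_inter .. ▸ subset_inter hcover Subset.rfl)
    _ ≤ ∑ i, μ ((x i +ᵥ L) ∩ K) := measure_iUnion_fintype_le μ _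
    _ ≤ ∑ _i : Fin m, 2 ^ Module.finrank ℝ E * μ (L ∩ K) :=
        Finset.sum_le_sum fun i _ => hK.measure_vadd_inter_le hL (x i)
    _ = m * (2 ^ Module.finrank ℝ E * μ (L ∩ K)) := by simp

end IsSymmetricBody

end Covering

namespace IsSymmetricBody

variable {n : ℕ} {C D : Set (Euc n)} {α : ℝ}

lemma exists_subset_iUnion_vadd_transCov (hC : IsSymmetricBody C) (hD : IsSymmetricBody D)
    (hα : α ≠ 0) : ∃ x : Fin (transCov D C α) → Euc n, C ⊆ ⋃ i, x i +ᵥ α • D :=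
  let ⟨m, x, hcover, _⟩ := hC.exists_subset_iUnion_vadd_and_mul_measure_le (μ := volume)
    (hD.smul hα)
  Nat.sInf_mem (s := {m | ∃ x : Fin m → Euc n, C ⊆ ⋃ i, x i +ᵥ α • D}) ⟨m, x, hcover⟩

lemma exists_polarSet_smul_subset_iUnion_vadd (hC : IsSymmetricBody C) (hD : IsSymmetricBody D)
    (hα : α ≠ 0) :
    ∃ y : Fin (transCov (polarSet C) (polarSet D) α) → Euc n,
      polarSet (α • D) ⊆ ⋃ i, y i +ᵥ polarSet C := by
  obtain ⟨y, hy⟩ := hD.polarSet.exists_subset_iUnion_vadd_transCov hC.polarSet hα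
  refine ⟨fun i => α⁻¹ • y i, fun z hz => ?_⟩
  obtain ⟨i, _, ⟨w, hw, rfl⟩, hwz⟩ := mem_iUnion.1 (hy (smul_mem_polarSet_of_mem_polarSet_smul hz))
  refine mem_iUnion.2 ⟨i, w, hw, ?_⟩
  rw [← inv_smul_smul₀ hα z, ← hwz]
  simp [hα]

/-- With `B = α D`, covering numbers become volumes: `N_D(C, α)` is about `|C + B| / |B|` and
`N_{C°}(D°, α)` about `|B°| / |C° ∩ B°|`, where `C° ∩ B°` is about `(C + B)°`. -/
theorem transCov_le_mul_transCov_polarSet (hC : IsSymmetricBody C) (hD : IsSymmetricBody D)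
    (hα : α ≠ 0) :
    (transCov D C α : ℝ) ≤ 64 ^ n * transCov (polarSet C) (polarSet D) α := by
  set B := α • D
  have hB : IsSymmetricBody B := hD.smul hα
  obtain ⟨N, x, hcover, hN⟩ := hC.exists_subset_iUnion_vadd_and_mul_measure_le (μ := volume) hB
  obtain ⟨y, hpolarCover⟩ := hC.exists_polarSet_smul_subset_iUnion_vadd hD hα
  set m := transCov (polarSet C) (polarSet D) α
  have hm := hB.polarSet.measure_le_of_subset_iUnion_vadd (μ := volume) hC.polarSet hpolarCover
  rw [finrank_euclideanSpace_fin] at hN hm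
  have hW := hC.polarSet.inter hB.polarSet
  set W := polarSet C ∩ polarSet B
  have hvol : volume B * volume W * N ≤ volume B * volume W * (64 ^ n * m) :=
    calc volume B * volume W * N = N * volume B * volume W := by ring
      _ ≤ 2 ^ n * volume (C + B) * (2 ^ n * volume (polarSet (C + B))) :=
        mul_le_mul' hN (volume_polarSet_inter_polarSet_le C B)
      _ = 4 ^ n * (volume (C + B) * volume (polarSet (C + B))) := by
        rw [mul_mul_mul_comm, ← mul_pow]; norm_num
      _ ≤ 4 ^ n * (8 ^ n * (volume B * volume (polarSet B))) := by
        grw [(hC.add hB).volume_mul_volume_polarSet_le hB]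
      _ ≤ 4 ^ n * (8 ^ n * (volume B * (m * (2 ^ n * volume W)))) := by gcongr
      _ = volume B * volume W * ((4 * 8 * 2) ^ n * m) := by rw [mul_pow, mul_pow]; ring
      _ = volume B * volume W * (64 ^ n * m) := by norm_num
  have hNm : (N : ℝ≥0∞) ≤ 64 ^ n * m := (ENNReal.mul_le_mul_iff_right
    (mul_ne_zero hB.measure_ne_zero hW.measure_ne_zero)
    (ENNReal.mul_ne_top hB.measure_ne_top hW.measure_ne_top)).1 hvol
  calc (transCov D C α : ℝ) ≤ N := Nat.cast_le.2 (Nat.sInf_le ⟨x, hcover⟩)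
    _ ≤ 64 ^ n * m := by exact_mod_cast hNm

end IsSymmetricBody

/-- Duality for volumetric coverings by translates (König–Milman). -/
theorem mink_cover_duality :
    ∃ c : ℝ, 1 ≤ c ∧ ∀ d : ℕ, 2 ≤ d →
      ∀ C D : Set (Euc d), IsConvexBody C → IsConvexBody D →
        C = -C → D = -D →
        ∀ α : ℝ, 0 < α →
          (c ^ d)⁻¹ * (transCov (polarSet C) (polarSet D) α : ℝ) ≤
              (transCov D C α : ℝ) ∧
          (transCov D C α : ℝ) ≤
              c ^ d * (transCov (polarSet C) (polarSet D) α : ℝ) := by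
  refine ⟨64, by norm_num, fun d _ C D hCbody hDbody hCneg hDneg α hα => ?_⟩
  have hC : IsSymmetricBody C := .of_isConvexBody hCbody hCneg
  have hD : IsSymmetricBody D := .of_isConvexBody hDbody hDneg
  have hpolar := hD.polarSet.transCov_le_mul_transCov_polarSet hC.polarSet hα.ne'
  rw [hC.polarSet_polarSet, hD.polarSet_polarSet] at hpolar
  exact ⟨(inv_mul_le_iff₀ (by positivity)).2 hpolar,
    hC.transCov_le_mul_transCov_polarSet hD hα.ne'⟩
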